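/- arXiv:2507.10828 — 9 statements merged into one kernel-verified Lean document; each statement's English description precedes it below -/
import Mathlib

section
/- Let n ≥ 2 and d ≥ 1 be integers. If S ⊆ [n]^∞ is a d-maximal set that contains no 1-ball, then S is finite and |S| ≤ d²·(n + 8·n^{2/3})^d. -/
/-- Hamming distance between infinite words over `Fin n`, as an extended natural number. -/
noncomputable def hDist (n : ℕ) (a b : ℕ → Fin n) : ℕ∞ := {i | a i ≠ b i}.encard

/-- The `r`-ball around `a`. -/
def hBall (n : ℕ) (a : ℕ → Fin n) (r : ℕ) : Set (ℕ → Fin n) := {x | hDist n x a ≤ (r : ℕ∞)}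

/-- `S` is `d`-maximal: it has diameter `d` and any point within distance `d`
of all of `S` already belongs to `S`. -/
def IsDMaximal (n d : ℕ) (S : Set (ℕ → Fin n)) : Prop :=
  (∀ a ∈ S, ∀ b ∈ S, hDist n a b ≤ (d : ℕ∞)) ∧
  (∃ a ∈ S, ∃ b ∈ S, hDist n a b = (d : ℕ∞)) ∧
  (∀ x : ℕ → Fin n, (∀ s ∈ S, hDist n x s ≤ (d : ℕ∞)) → x ∈ S)

/-- `S` contains an `r`-ball. -/
def ContainsBall (n : ℕ) (S : Set (ℕ → Fin n)) (r : ℕ) : Prop :=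
  ∃ a, hBall n a r ⊆ S

open Classical in
lemma sumwt_aux (n : ℕ) (z : ℝ) (a s : Fin n) (h : s ≠ a) :
    ∑ r : Fin n, ((if r = a then 1 else z) * (if r = s then 2 else 1)) = 1 + n * z := by
  have : ∀ r : Fin n, ((if r = a then (1:ℝ) else z) * (if r = s then 2 else 1))
      = z + (if r = a then 1 - z else 0) + (if r = s then z else 0) := by
    intro r
    by_cases h1 : r = a
    · subst h1
      simp [Ne.symm h]
    · by_cases h2 : r = s
      · simp [h1, h2, h]; ring
      · simp [h1, h2]
  rw [Finset.sum_congr rfl (fun r _ => this r)]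
  simp [Finset.sum_add_distrib]
  ring

open Classical in
lemma key_aux (n d : ℕ) (a : ℕ → Fin n) (S : Set (ℕ → Fin n)) (D : Finset ℕ)
    (hdiam : ∀ x ∈ S, ∀ y ∈ S, hDist n x y ≤ (d : ℕ∞))
    (hanti : ∀ c, ∃ s ∈ S, (d : ℕ∞) ≤ hDist n c s)
    (hT : ∀ s ∈ S, ∃ K : Finset ℕ, (∀ i, i ∉ D → s i ≠ a i → i ∈ K) ∧ 2 * K.card ≤ d) :
    ∀ (j : ℕ) (E : Finset ℕ) (c : ℕ → Fin n) (F : Finset (ℕ → Fin n)), D ⊆ E →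
      (∀ i, i ∉ E → c i = a i) →
      (∀ x ∈ F, x ∈ S ∧ (∀ i ∈ E, x i = c i) ∧ {i | x i ≠ c i}.encard = (j : ℕ∞)) →
      ∀ z : ℝ, 0 < z → (F.card : ℝ) ≤ z⁻¹ ^ j * Real.exp (d * n * z) := by
  intro j
  induction j using Nat.strong_induction_on with
  | _ j ih =>
  intro E c F hDE hc hF z hz
  rcases Nat.eq_zero_or_pos j with hj | hj
  · subst hj
    have h1 : F.card ≤ 1 := by
      rw [Finset.card_le_one]
      intro x hx y hy
      have h1 := (hF x hx).2.2
      have h2 := (hF y hy).2.2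
      simp only [Nat.cast_zero, Set.encard_eq_zero, Set.eq_empty_iff_forall_notMem,
        Set.mem_ofPred_eq, not_not] at h1 h2
      funext i
      rw [h1, h2]
    have h2 : (F.card : ℝ) ≤ 1 := by exact_mod_cast h1
    have h3 : 1 ≤ Real.exp (d * n * z) := Real.one_le_exp (by positivity)
    simp
    linarith
  · obtain ⟨s, hsS, hs⟩ := hanti c
    obtain ⟨K, hK, hKd⟩ := hT s hsS
    set T : Finset ℕ := K.filter (fun i => i ∉ E ∧ s i ≠ a i) with hTdef
    have hTmem : ∀ i, i ∈ T ↔ i ∉ E ∧ s i ≠ a i := by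
      intro i
      simp only [hTdef, Finset.mem_filter]
      constructor
      · exact fun h => h.2
      · exact fun h => ⟨hK i (fun h' => h.1 (hDE h')) h.2, h⟩
    have hTd : 2 * T.card ≤ d := by
      have : T.card ≤ K.card := Finset.card_filter_le _ _
      omega
    let g : (ℕ → Fin n) → (T → Fin n) := fun x i => x i
    let wt : ℕ → Fin n → ℝ := fun i r => (if r = a i then 1 else z) * (if r = s i then 2 else 1)
    have hfib : ∀ r : T → Fin n, (({x ∈ F | g x = r} : Finset _).card : ℝ) ≤
        (∏ i : T, wt i (r i)) * (z⁻¹ ^ j * Real.exp (d * n * (z / 2))) := by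
      intro r
      rcases Finset.eq_empty_or_nonempty ({x ∈ F | g x = r} : Finset _) with he | ⟨x0, hx0⟩
      · rw [he]
        simp only [Finset.card_empty, Nat.cast_zero]
        have : 0 ≤ ∏ i : T, wt i (r i) := by
          apply Finset.prod_nonneg
          intro i _
          simp only [wt]
          positivity
        positivity
      · rw [Finset.mem_filter] at hx0
        obtain ⟨hx0F, hx0r⟩ := hx0
        let c' : ℕ → Fin n := fun i => if i ∈ T then x0 i else c i
        let Q : Finset ℕ := T.filter (fun i => x0 i ≠ a i)
        let W : Finset ℕ := T.filter (fun i => x0 i = s i)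
        have hfT : ∀ x ∈ ({x ∈ F | g x = r} : Finset _), ∀ i ∈ T, x i = x0 i := by
          intro x hx i hi
          rw [Finset.mem_filter] at hx
          have h := hx.2.trans hx0r.symm
          exact congrFun h ⟨i, hi⟩
        have hU : ∀ x ∈ ({x ∈ F | g x = r} : Finset _),
            (Q.card : ℕ∞) + {i | x i ≠ c' i}.encard = j := by
          intro x hx
          have hxT := hfT x hx
          have hxF := hF x (Finset.mem_filter.1 hx).1
          rw [← hxF.2.2, ← Set.encard_coe_eq_coe_finsetCard, ← Set.encard_union_eq]
          · congr 1
            ext i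
            simp only [Q, c', Set.mem_union, Finset.mem_coe, Finset.mem_filter, Set.mem_ofPred_eq]
            by_cases hi : i ∈ T
            · have h1 := hxT i hi
              have h2 := hc i ((hTmem i).1 hi).1
              simp [hi, h1, h2]
            · simp [hi]
          · rw [Set.disjoint_left]
            intro i hi
            simp only [Q, Finset.mem_coe, Finset.mem_filter] at hi
            simp [c', hi.1, hxT i hi.1]
        have hx0m : x0 ∈ ({x ∈ F | g x = r} : Finset _) := Finset.mem_filter.2 ⟨hx0F, hx0r⟩
        have hQj : Q.card ≤ j := by
          have := hU x0 hx0m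
          have h2 : (Q.card : ℕ∞) ≤ j := by rw [← this]; exact le_self_add
          exact_mod_cast h2
        obtain ⟨u, hu⟩ := Nat.exists_eq_add_of_le hQj
        have hU' : ∀ x ∈ ({x ∈ F | g x = r} : Finset _), {i | x i ≠ c' i}.encard = (u : ℕ∞) := by
          intro x hx
          have h := hU x hx
          rw [hu, Nat.cast_add] at h
          exact WithTop.add_left_cancel (ENat.natCast_ne_top _) h
        have huW : u ≤ W.card := by
          have hxF := hF x0 hx0F
          have h1 : {i | c i ≠ s i} ∪ {i | x0 i ≠ c' i} ⊆ {i | x0 i ≠ s i} ∪ (W : Set ℕ) := by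
            intro i hi
            simp only [W, c', Set.mem_union, Finset.mem_coe, Finset.mem_filter,
              Set.mem_ofPred_eq] at hi ⊢
            by_cases hxs : x0 i = s i
            · right
              refine ⟨?_, hxs⟩
              rw [hTmem]
              by_contra hcon
              have hiT : i ∉ T := fun h => hcon ((hTmem i).1 h)
              simp only [hiT, if_false] at hi
              have hne : x0 i ≠ c i := by
                rcases hi with h | h
                · rw [hxs]; exact h.symm
                · exact h
              have hiE : i ∉ E := fun h => hne (hxF.2.1 i h)
              have := hc i hiE
              apply hcon
              refine ⟨hiE, ?_⟩
              rw [← this, ← hxs]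
              exact hne
            · exact Or.inl hxs
          have h2 : Disjoint {i | c i ≠ s i} {i | x0 i ≠ c' i} := by
            rw [Set.disjoint_left]
            intro i hi hi2
            simp only [c', Set.mem_ofPred_eq] at hi hi2
            by_cases hiT : i ∈ T
            · simp [hiT] at hi2
            · simp only [hiT, if_false] at hi2
              have hiE : i ∉ E := fun h => hi2 (hxF.2.1 i h)
              apply hiT
              rw [hTmem]
              refine ⟨hiE, ?_⟩
              rw [← hc i hiE]
              exact hi.symm
          have h3 := Set.encard_le_encard h1
          rw [Set.encard_union_eq h2, hU' x0 hx0m] at h3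
          have h4 := Set.encard_union_le {i | x0 i ≠ s i} (W : Set ℕ)
          rw [Set.encard_coe_eq_coe_finsetCard] at h4
          have h5 := hdiam x0 hxF.1 s hsS
          unfold hDist at h5 hs
          have h6 : (d : ℕ∞) + u ≤ d + W.card :=
            calc (d : ℕ∞) + u ≤ {i | c i ≠ s i}.encard + u := by gcongr
              _ ≤ _ := h3
              _ ≤ _ := h4
              _ ≤ _ := by gcongr
          have h7 : d + u ≤ d + W.card := by exact_mod_cast h6
          omega
        have hWQ : W.card ≤ Q.card := by
          apply Finset.card_le_card
          intro i hi
          simp only [W, Q, Finset.mem_filter] at hi ⊢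
          exact ⟨hi.1, by rw [hi.2]; exact ((hTmem i).1 hi.1).2⟩
        have hlt : u < j := by omega
        have hI := ih u hlt (E ∪ T) c' ({x ∈ F | g x = r} : Finset _)
          (hDE.trans Finset.subset_union_left) (by
            intro i hi
            simp only [Finset.mem_union, not_or] at hi
            simp [c', hi.2, hc i hi.1]) (by
            intro x hx
            have hxF := hF x (Finset.mem_filter.1 hx).1
            refine ⟨hxF.1, ?_, hU' x hx⟩
            intro i hi
            by_cases hiT : i ∈ T
            · simp [c', hiT, hfT x hx i hiT]
            · simp only [Finset.mem_union, hiT, or_false] at hi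
              simp [c', hiT, hxF.2.1 i hi]) (z / 2) (by positivity)
        refine hI.trans ?_
        rw [← mul_assoc]
        refine mul_le_mul_of_nonneg_right ?_ (Real.exp_pos _).le
        have hprod : ∏ i : T, wt i (r i) = z ^ Q.card * 2 ^ W.card := by
          have h1 : ∏ i : T, wt i (r i) = ∏ i : T, wt i (x0 i) := by
            rw [← hx0r]
          rw [h1, Finset.prod_coe_sort T (fun i => wt i (x0 i))]
          simp only [wt, Finset.prod_mul_distrib, Finset.prod_ite, Finset.prod_const, one_pow,
            one_mul, mul_one, Q, W, ne_eq]
        rw [hprod, hu, pow_add]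
        have e1 : (z / 2)⁻¹ ^ u = 2 ^ u * z⁻¹ ^ u := by
          rw [← mul_pow]; congr 1; field_simp
        have e2 : z ^ Q.card * 2 ^ W.card * (z⁻¹ ^ Q.card * z⁻¹ ^ u) = 2 ^ W.card * z⁻¹ ^ u := by
          have : z ^ Q.card * z⁻¹ ^ Q.card = 1 := by
            rw [← mul_pow, mul_inv_cancel₀ hz.ne', one_pow]
          calc _ = (z ^ Q.card * z⁻¹ ^ Q.card) * (2 ^ W.card * z⁻¹ ^ u) := by ring
            _ = _ := by rw [this, one_mul]
        rw [e1, e2]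
        have : (2:ℝ) ^ u ≤ 2 ^ W.card := pow_le_pow_right₀ (by norm_num) huW
        gcongr
    have hcard : F.card = ∑ r : T → Fin n, ({x ∈ F | g x = r} : Finset _).card :=
      Finset.card_eq_sum_card_fiberwise (fun x _ => Finset.mem_coe.2 (Finset.mem_univ _))
    rw [hcard, Nat.cast_sum]
    refine (Finset.sum_le_sum (fun r _ => hfib r)).trans ?_
    rw [← Finset.sum_mul]
    have hps : ∑ r : T → Fin n, ∏ i : T, wt i (r i) = (1 + n * z) ^ T.card := by
      have h := Finset.prod_univ_sum (fun _ : T => (Finset.univ : Finset (Fin n)))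
        (fun (i : T) r => wt i r)
      rw [Fintype.piFinset_univ] at h
      rw [← h]
      rw [Finset.prod_congr rfl (fun (i : T) _ => sumwt_aux n z (a i) (s i) ((hTmem i).1 i.2).2)]
      simp
    rw [hps]
    have hexp : (1 + n * z) ^ T.card ≤ Real.exp (d * n * (z / 2)) := by
      calc (1 + n * z) ^ T.card ≤ Real.exp (n * z) ^ T.card := by
            gcongr
            linarith [Real.add_one_le_exp (n * z)]
        _ = Real.exp (T.card * (n * z)) := by rw [Real.exp_nat_mul (n * z) T.card]
        _ ≤ _ := by
            apply Real.exp_le_exp.2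
            have : (2 * T.card : ℝ) ≤ d := by exact_mod_cast hTd
            have h0 : 0 ≤ n * z := by positivity
            nlinarith
    calc _ ≤ Real.exp (d * n * (z / 2)) * (z⁻¹ ^ j * Real.exp (d * n * (z / 2))) := by gcongr
      _ = z⁻¹ ^ j * (Real.exp (d * n * (z / 2)) * Real.exp (d * n * (z / 2))) := by ring
      _ = _ := by rw [← Real.exp_add]; congr 2; ring

open Classical in
lemma tail_aux (n d : ℕ) (D : Finset ℕ) (hD : D.card = d) (a x : ℕ → Fin n)
    (h : hDist n x a ≤ (d : ℕ∞)) :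
    {i | i ∉ D ∧ x i ≠ a i}.encard ≤ ((D.filter (fun i => x i = a i)).card : ℕ∞) := by
  have h1 : {i | i ∉ D ∧ x i ≠ a i} ∪ ((D.filter (fun i => ¬ x i = a i) : Finset ℕ) : Set ℕ)
      ⊆ {i | x i ≠ a i} := by
    intro i hi
    simp only [Set.mem_union, Set.mem_ofPred_eq, Finset.mem_coe, Finset.mem_filter] at hi ⊢
    tauto
  have h2 : Disjoint {i | i ∉ D ∧ x i ≠ a i}
      ((D.filter (fun i => ¬ x i = a i) : Finset ℕ) : Set ℕ) := by
    rw [Set.disjoint_left]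
    intro i hi hi2
    simp only [Set.mem_ofPred_eq, Finset.mem_coe, Finset.mem_filter] at hi hi2
    exact hi.1 hi2.1
  have h3 := Set.encard_le_encard h1
  rw [Set.encard_union_eq h2, Set.encard_coe_eq_coe_finsetCard] at h3
  have h4 := h3.trans h
  have h5 := Finset.card_filter_add_card_filter_not (s := D) (fun i => x i = a i)
  rw [← hD, ← h5, Nat.cast_add] at h4
  exact (ENat.add_le_add_iff_right (ENat.natCast_ne_top _)).1 h4

lemma sumwt2_aux (n : ℕ) (q : ℝ) (a b : Fin n) (h : a ≠ b) (hq : 1 ≤ q) :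
    ∑ r : Fin n, ((if r = a then q else 1) * (if r = b then q else 1)) ≤ n + 2 * q := by
  have : ∀ r : Fin n, ((if r = a then q else 1) * (if r = b then q else 1))
      ≤ 1 + (if r = a then q else 0) + (if r = b then q else 0) := by
    intro r
    by_cases h1 : r = a
    · subst h1
      simp [h]
    · by_cases h2 : r = b
      · simp [h1, h2, h.symm]
      · simp [h1, h2]
  refine (Finset.sum_le_sum (fun r _ => this r)).trans ?_
  simp [Finset.sum_add_distrib]
  linarith

lemma num_aux (n : ℕ) (hn : 2 ≤ n) : ∃ q z : ℝ, 1 ≤ q ∧ 0 < z ∧ z⁻¹ = q ^ 2 ∧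
    (n + 2 * q) * Real.exp (n * z) ≤ (n : ℝ) + 8 * (n : ℝ) ^ ((2 : ℝ) / 3) := by
  have hn0 : (0:ℝ) < n := by exact_mod_cast (by omega : 0 < n)
  have hn1 : (1:ℝ) ≤ n := by exact_mod_cast (by omega : 1 ≤ n)
  set y : ℝ := (n : ℝ) ^ ((1 : ℝ) / 3) with hy
  have hy1 : 1 ≤ y := Real.one_le_rpow hn1 (by norm_num)
  have hy3 : (n : ℝ) = y ^ 3 := by
    rw [hy, ← Real.rpow_natCast, ← Real.rpow_mul hn0.le]; norm_num
  have hy2 : (n : ℝ) ^ ((2 : ℝ) / 3) = y ^ 2 := by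
    rw [hy, ← Real.rpow_natCast, ← Real.rpow_mul hn0.le]; norm_num
  have hy0 : 0 < y := by linarith
  refine ⟨y ^ 2, (y ^ 4)⁻¹, one_le_pow₀ hy1, by positivity, by rw [inv_inv]; ring, ?_⟩
  rw [hy2, hy3]
  have e : y ^ 3 * (y ^ 4)⁻¹ = y⁻¹ := by field_simp
  rw [e]
  have ht1 : y⁻¹ ≤ 1 := inv_le_one_of_one_le₀ hy1
  have ht0 : 0 < y⁻¹ := by positivity
  have h := Real.abs_exp_sub_one_sub_id_le (x := y⁻¹) (by rw [abs_of_pos ht0]; exact ht1)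
  have h2 : Real.exp y⁻¹ ≤ 1 + y⁻¹ + y⁻¹ ^ 2 := by
    have := (abs_le.1 h).2
    linarith
  calc (y ^ 3 + 2 * y ^ 2) * Real.exp y⁻¹ ≤ (y ^ 3 + 2 * y ^ 2) * (1 + y⁻¹ + y⁻¹ ^ 2) := by gcongr
    _ = y ^ 3 + 3 * y ^ 2 + 3 * y + 2 := by field_simp; ring
    _ ≤ y ^ 3 + 8 * y ^ 2 := by nlinarith

open Classical in
lemma main_aux (n d : ℕ) (hn : 2 ≤ n) (hd : 1 ≤ d) (S : Set (ℕ → Fin n))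
    (hmax : IsDMaximal n d S) (hball : ¬ ContainsBall n S 1) (F : Finset (ℕ → Fin n))
    (hFS : ∀ x ∈ F, x ∈ S) :
    (F.card : ℝ) ≤ (d : ℝ) ^ 2 * ((n : ℝ) + 8 * (n : ℝ) ^ ((2 : ℝ) / 3)) ^ d := by
  obtain ⟨hdiam, ⟨a, haS, b, hbS, hab⟩, hmx⟩ := hmax
  have hanti : ∀ c, ∃ s ∈ S, (d : ℕ∞) ≤ hDist n c s := by
    intro c
    by_contra! hcon
    apply hball
    refine ⟨c, fun x hx => hmx x fun s hs => ?_⟩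
    have h1 := hcon s hs
    have h2 : hDist n x s ≤ hDist n x c + hDist n c s := by
      unfold hDist
      refine (Set.encard_le_encard ?_).trans (Set.encard_union_le _ _)
      intro i hi
      simp only [Set.mem_union, Set.mem_ofPred_eq] at hi ⊢
      by_contra! h
      exact hi (h.1.trans h.2)
    have h3 : hDist n x c ≤ ((1 : ℕ) : ℕ∞) := hx
    have h4 : hDist n c s + 1 ≤ d := Order.add_one_le_of_lt h1
    calc hDist n x s ≤ _ := h2
      _ ≤ 1 + hDist n c s := by gcongr; exact_mod_cast h3
      _ = hDist n c s + 1 := add_comm _ _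
      _ ≤ d := h4
  have hfin : {i | a i ≠ b i}.Finite := by
    apply Set.finite_of_encard_eq_coe (k := d)
    exact hab
  set D : Finset ℕ := hfin.toFinset with hDdef
  have hDmem : ∀ i, i ∈ D ↔ a i ≠ b i := by intro i; simp [hDdef]
  have hDcard : D.card = d := by
    have : (D.card : ℕ∞) = d := by
      rw [← hab, ← Set.encard_coe_eq_coe_finsetCard, hDdef, Set.Finite.coe_toFinset]
      rfl
    exact_mod_cast this
  have htail : ∀ x ∈ S, ∃ K : Finset ℕ, (∀ i, i ∈ K ↔ i ∉ D ∧ x i ≠ a i) ∧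
      K.card ≤ (D.filter (fun i => x i = a i)).card ∧
      K.card ≤ (D.filter (fun i => x i = b i)).card := by
    intro x hx
    have h1 := tail_aux n d D hDcard a x (hdiam x hx a haS)
    have h2 := tail_aux n d D hDcard b x (hdiam x hx b hbS)
    have e : {i | i ∉ D ∧ x i ≠ b i} = {i | i ∉ D ∧ x i ≠ a i} := by
      ext i
      simp only [Set.mem_ofPred_eq]
      constructor
      · rintro ⟨h, h'⟩
        have : a i = b i := by by_contra hh; exact h ((hDmem i).2 hh)
        exact ⟨h, by rw [this]; exact h'⟩
      · rintro ⟨h, h'⟩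
        have : a i = b i := by by_contra hh; exact h ((hDmem i).2 hh)
        exact ⟨h, by rw [← this]; exact h'⟩
    rw [e] at h2
    have hf : {i | i ∉ D ∧ x i ≠ a i}.Finite := Set.finite_of_encard_le_coe h1
    rw [hf.encard_eq_coe_toFinset_card] at h1 h2
    exact ⟨hf.toFinset, by intro i; simp, by exact_mod_cast h1, by exact_mod_cast h2⟩
  have hsum : ∀ x : ℕ → Fin n, (D.filter (fun i => x i = a i)).card +
      (D.filter (fun i => x i = b i)).card ≤ d := by
    intro x
    rw [← hDcard, ← Finset.card_union_of_disjoint]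
    · apply Finset.card_le_card
      apply Finset.union_subset <;> apply Finset.filter_subset
    · rw [Finset.disjoint_left]
      intro i hi hi2
      rw [Finset.mem_filter] at hi hi2
      exact (hDmem i).1 hi.1 (hi.2.symm.trans hi2.2)
  have hT : ∀ s ∈ S, ∃ K : Finset ℕ, (∀ i, i ∉ D → s i ≠ a i → i ∈ K) ∧ 2 * K.card ≤ d := by
    intro s hs
    obtain ⟨K, h1, h2, h3⟩ := htail s hs
    refine ⟨K, fun i h h' => (h1 i).2 ⟨h, h'⟩, ?_⟩
    have := hsum s
    omega
  obtain ⟨q, z, hq, hz, hzq, hfinal⟩ := num_aux n hn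
  let g : (ℕ → Fin n) → (D → Fin n) × ℕ := fun x => (fun i => x i, {i | i ∉ D ∧ x i ≠ a i}.ncard)
  let wt : ℕ → Fin n → ℝ := fun i r => (if r = a i then q else 1) * (if r = b i then q else 1)
  have hgk : ∀ x ∈ S, ∃ K : Finset ℕ, (∀ i, i ∈ K ↔ i ∉ D ∧ x i ≠ a i) ∧
      K.card ≤ (D.filter (fun i => x i = a i)).card ∧
      K.card ≤ (D.filter (fun i => x i = b i)).card ∧ (g x).2 = K.card := by
    intro x hx
    obtain ⟨K, h1, h2, h3⟩ := htail x hx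
    refine ⟨K, h1, h2, h3, ?_⟩
    simp only [g]
    rw [← Set.ncard_coe_finset]
    congr 1
    ext i
    simp [h1]
  have hfib : ∀ r : (D → Fin n) × ℕ, (({x ∈ F | g x = r} : Finset _).card : ℝ) ≤
      (∏ i : D, wt i (r.1 i)) * Real.exp (d * n * z) := by
    intro r
    rcases Finset.eq_empty_or_nonempty ({x ∈ F | g x = r} : Finset _) with he | ⟨x0, hx0⟩
    · rw [he]
      simp only [Finset.card_empty, Nat.cast_zero]
      have : 0 ≤ ∏ i : D, wt i (r.1 i) := by
        apply Finset.prod_nonneg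
        intro i _
        simp only [wt]
        positivity
      positivity
    · rw [Finset.mem_filter] at hx0
      obtain ⟨hx0F, hx0r⟩ := hx0
      obtain ⟨K, hK1, hK2, hK3, hK4⟩ := hgk x0 (hFS x0 hx0F)
      let c : ℕ → Fin n := fun i => if i ∈ D then x0 i else a i
      have hI := key_aux n d a S D hdiam hanti hT K.card D c ({x ∈ F | g x = r} : Finset _)
        (Finset.Subset.refl _) (by intro i hi; simp [c, hi]) (by
          intro x hx
          rw [Finset.mem_filter] at hx
          have hxD : ∀ i ∈ D, x i = x0 i := by
            intro i hi
            have h := congrArg Prod.fst (hx.2.trans hx0r.symm)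
            exact congrFun h ⟨i, hi⟩
          obtain ⟨K', hK'1, -, -, hK'4⟩ := hgk x (hFS x hx.1)
          refine ⟨hFS x hx.1, ?_, ?_⟩
          · intro i hi
            simp [c, hi, hxD i hi]
          · have h1 : {i | x i ≠ c i} = (K' : Set ℕ) := by
              ext i
              simp only [Set.mem_ofPred_eq, Finset.mem_coe, hK'1, c]
              by_cases hi : i ∈ D
              · simp [hi, hxD i hi]
              · simp [hi]
            rw [h1, Set.encard_coe_eq_coe_finsetCard, ← hK'4, ← hK4, hx.2, hx0r]) z hz
      refine hI.trans ?_
      refine mul_le_mul_of_nonneg_right ?_ (Real.exp_pos _).le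
      have hprod : ∏ i : D, wt i (r.1 i) = q ^ (D.filter (fun i => x0 i = a i)).card *
          q ^ (D.filter (fun i => x0 i = b i)).card := by
        have h1 : ∏ i : D, wt i (r.1 i) = ∏ i : D, wt i (x0 i) := by
          rw [← hx0r]
        rw [h1, Finset.prod_coe_sort D (fun i => wt i (x0 i))]
        simp only [wt, Finset.prod_mul_distrib, Finset.prod_ite, Finset.prod_const, one_pow,
          mul_one]
      rw [hprod, hzq, ← pow_mul, ← pow_add]
      exact pow_le_pow_right₀ hq (by omega)
  have hmaps : Set.MapsTo g (F : Set (ℕ → Fin n))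
      (((Finset.univ : Finset (D → Fin n)) ×ˢ Finset.range (d / 2 + 1) :
        Finset ((D → Fin n) × ℕ)) : Set ((D → Fin n) × ℕ)) := by
    intro x hx
    obtain ⟨K, hK1, hK2, hK3, hK4⟩ := hgk x (hFS x hx)
    have := hsum x
    rw [Finset.mem_coe, Finset.mem_product]
    refine ⟨Finset.mem_univ _, ?_⟩
    rw [Finset.mem_range, hK4]
    omega
  rw [Finset.card_eq_sum_card_fiberwise hmaps, Nat.cast_sum]
  refine (Finset.sum_le_sum (fun r _ => hfib r)).trans ?_
  rw [← Finset.sum_mul, Finset.sum_product]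
  simp only [Finset.sum_const, Finset.card_range, nsmul_eq_mul]
  rw [← Finset.mul_sum]
  have hps : ∑ r : D → Fin n, ∏ i : D, wt i (r i) ≤ (n + 2 * q) ^ d := by
    have h := Finset.prod_univ_sum (fun _ : D => (Finset.univ : Finset (Fin n)))
      (fun (i : D) r => wt i r)
    rw [Fintype.piFinset_univ] at h
    rw [← h]
    refine (Finset.prod_le_prod (fun i _ => Finset.sum_nonneg fun r _ => ?_)
      (fun (i : D) _ => sumwt2_aux n q (a i) (b i) ((hDmem i).1 i.2) hq)).trans ?_
    · have hw : ∀ (i : ℕ) (r : Fin n), 0 ≤ wt i r := by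
        intro i r
        simp only [wt]
        positivity
      exact hw _ _
    · simp [hDcard]
  have hdd : ((d / 2 + 1 : ℕ) : ℝ) ≤ (d : ℝ) ^ 2 := by
    have : d / 2 + 1 ≤ d ^ 2 := by
      rcases Nat.lt_or_ge d 2 with h | h
      · have : d = 1 := by omega
        subst this; norm_num
      · have : d / 2 + 1 ≤ d := by omega
        nlinarith
    exact_mod_cast this
  calc _ ≤ (d : ℝ) ^ 2 * (n + 2 * q) ^ d * Real.exp (d * n * z) := by gcongr
    _ = (d : ℝ) ^ 2 * ((n + 2 * q) * Real.exp (n * z)) ^ d := by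
      rw [mul_pow, ← Real.exp_nat_mul]; ring_nf
    _ ≤ _ := by gcongr

theorem stmt0 (n d : ℕ) (hn : 2 ≤ n) (hd : 1 ≤ d) (S : Set (ℕ → Fin n))
    (hmax : IsDMaximal n d S) (hball : ¬ ContainsBall n S 1) :
    S.Finite ∧ (S.ncard : ℝ) ≤ (d : ℝ) ^ 2 * ((n : ℝ) + 8 * (n : ℝ) ^ ((2 : ℝ) / 3)) ^ d := by
  have hF := main_aux n d hn hd S hmax hball
  have hfin : S.Finite := by
    by_contra hinf
    obtain ⟨N, hN⟩ := exists_nat_gt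
      ((d : ℝ) ^ 2 * ((n : ℝ) + 8 * (n : ℝ) ^ ((2 : ℝ) / 3)) ^ d)
    obtain ⟨F, hFS, hFc⟩ := Set.Infinite.exists_subset_card_eq hinf N
    have := hF F (fun x hx => hFS hx)
    rw [hFc] at this
    linarith
  refine ⟨hfin, ?_⟩
  rw [Set.ncard_eq_toFinset_card S hfin]
  exact hF _ (fun x hx => by simpa using hx)
end

section
/- For every integer d ≥ 1 there exists a finite d-maximal set S ⊆ [2]^∞ with |S| > binom(⌊3d/2⌋, d). -/
open Classical in
/-- Indicator word. -/
noncomputable def wd (A : Finset ℕ) : ℕ → Fin 2 := fun i => if i ∈ A then 1 else 0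

/-- Finite Hamming distance. -/
def fD (A B : Finset ℕ) : ℕ := (A \ B).card + (B \ A).card

lemma fD_eq (A B : Finset ℕ) : fD A B + 2 * (A ∩ B).card = A.card + B.card := by
  unfold fD
  have h1 := Finset.card_sdiff_add_card_inter A B
  have h2 := Finset.card_sdiff_add_card_inter B A
  rw [Finset.inter_comm B A] at h2
  omega

lemma hDist_wd (A B : Finset ℕ) : hDist 2 (wd A) (wd B) = (fD A B : ℕ∞) := by
  unfold hDist fD
  have h : {i | wd A i ≠ wd B i} = (((A \ B) ∪ (B \ A) : Finset ℕ) : Set ℕ) := by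
    ext i
    by_cases h1 : i ∈ A <;> by_cases h2 : i ∈ B <;> simp [wd, h1, h2]
  rw [h, Set.encard_coe_eq_coe_finsetCard, Finset.card_union_of_disjoint]
  exact disjoint_sdiff_sdiff

lemma wd_inj : Function.Injective wd := by
  intro A B h
  ext i
  have := congrFun h i
  by_cases h1 : i ∈ A <;> by_cases h2 : i ∈ B <;> simp [wd, h1, h2] at this ⊢

/-- Finite version of maximality. -/
def FMax (d : ℕ) (T : Finset (Finset ℕ)) : Prop :=
  (∀ A ∈ T, ∀ B ∈ T, fD A B ≤ d) ∧ (∃ A ∈ T, ∃ B ∈ T, fD A B = d) ∧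
  (∀ X, (∀ A ∈ T, fD A X ≤ d) → X ∈ T)

lemma fD_comm (A B : Finset ℕ) : fD A B = fD B A := by
  unfold fD; omega

lemma transfer (d : ℕ) (T : Finset (Finset ℕ)) (h : FMax d T) :
    ∃ S : Set (ℕ → Fin 2), S.Finite ∧ IsDMaximal 2 d S ∧ S.ncard = T.card := by
  obtain ⟨h1, ⟨A, hA, B, hB, hAB⟩, h3⟩ := h
  refine ⟨wd '' (T : Set (Finset ℕ)), T.finite_toSet.image _, ⟨?_, ?_, ?_⟩, ?_⟩
  · rintro _ ⟨A, hA, rfl⟩ _ ⟨B, hB, rfl⟩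
    rw [hDist_wd]
    exact_mod_cast h1 A hA B hB
  · exact ⟨_, ⟨A, hA, rfl⟩, _, ⟨B, hB, rfl⟩, by rw [hDist_wd, hAB]⟩
  · intro x hx
    have hfin : {i | x i = 1}.Finite := by
      have := hx _ ⟨A, hA, rfl⟩
      have hf : {i | x i ≠ wd A i}.Finite :=
        Set.finite_of_encard_le_coe this
      refine (hf.union A.finite_toSet).subset ?_
      intro i hi
      by_cases h : i ∈ A
      · exact Or.inr h
      · left
        have hi' : x i = 1 := hi
        simp [wd, h, hi']
    have hX : x = wd hfin.toFinset := by
      ext i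
      by_cases h : x i = 1
      · simp [wd, h]
      · simp only [wd, Set.Finite.mem_toFinset, Set.mem_setOf_eq, h, if_false]
        have := (x i).isLt
        have h' : (x i : ℕ) ≠ 1 := fun e => h (Fin.ext e)
        simp
        omega
    refine ⟨hfin.toFinset, ?_, hX.symm⟩
    apply h3
    intro C hC
    have := hx _ ⟨C, hC, rfl⟩
    rw [hX, hDist_wd, fD_comm] at this
    exact_mod_cast this
  · rw [Set.ncard_image_of_injective _ wd_inj, Set.ncard_coe_finset]

/-- The even construction. -/
def TE (k : ℕ) : Finset (Finset ℕ) :=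
  (Finset.range (3 * k)).powersetCard k ∪ {Finset.range (3 * k)}

lemma mem_TE {k : ℕ} {A : Finset ℕ} :
    A ∈ TE k ↔ (A ⊆ Finset.range (3 * k) ∧ A.card = k) ∨ A = Finset.range (3 * k) := by
  simp [TE, or_comm, Finset.mem_powersetCard]

lemma fD_range {k : ℕ} {A : Finset ℕ} (h : A ⊆ Finset.range (3 * k)) :
    fD A (Finset.range (3 * k)) = 3 * k - A.card := by
  have := fD_eq A (Finset.range (3 * k))
  rw [Finset.inter_eq_left.2 h, Finset.card_range] at this
  omega

lemma TE_max (k : ℕ) : FMax (2 * k) (TE k) := by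
  refine ⟨?_, ?_, ?_⟩
  · intro A hA B hB
    rw [mem_TE] at hA hB
    rcases hA with ⟨hA, cA⟩ | rfl
    · rcases hB with ⟨hB, cB⟩ | rfl
      · have := fD_eq A B
        omega
      · rw [fD_range hA]; omega
    · rcases hB with ⟨hB, cB⟩ | rfl
      · rw [fD_comm, fD_range hB]; omega
      · simp [fD]
  · have hs : Finset.range k ⊆ Finset.range (3 * k) := Finset.range_mono (by omega)
    refine ⟨Finset.range k, mem_TE.2 (Or.inl ⟨hs, by simp⟩), Finset.range (3 * k),
      mem_TE.2 (Or.inr rfl), ?_⟩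
    rw [fD_range hs, Finset.card_range]; omega
  · intro X hX
    have hR := hX _ (mem_TE.2 (Or.inr rfl))
    have eR := fD_eq (Finset.range (3 * k)) X
    have eX := Finset.card_sdiff_add_card_inter X (Finset.range (3 * k))
    have eZ := Finset.card_sdiff_add_card_inter (Finset.range (3 * k)) X
    rw [Finset.inter_comm] at eX
    rw [Finset.card_range] at eR eZ
    by_cases hc : (Finset.range (3 * k) ∩ X).card ≤ 2 * k
    · obtain ⟨A, hA, cA⟩ := Finset.exists_subset_card_eq
        (show k ≤ (Finset.range (3 * k) \ X).card by omega)
      have h1 := hX A (mem_TE.2 (Or.inl ⟨hA.trans Finset.sdiff_subset, cA⟩))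
      have h2 := fD_eq A X
      have h3 : A ∩ X = ∅ := by
        rw [← Finset.disjoint_iff_inter_eq_empty]
        exact Finset.disjoint_of_subset_left hA Finset.sdiff_disjoint
      rw [h3, Finset.card_empty] at h2
      have h4 : (X \ Finset.range (3 * k)).card = 0 := by omega
      rw [Finset.card_eq_zero, Finset.sdiff_eq_empty_iff_subset] at h4
      exact mem_TE.2 (Or.inl ⟨h4, by omega⟩)
    · obtain ⟨A, hA, hA', cA⟩ := Finset.exists_subsuperset_card_eq
        (show Finset.range (3 * k) \ X ⊆ Finset.range (3 * k) from Finset.sdiff_subset)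
        (show (Finset.range (3 * k) \ X).card ≤ k by omega) (by simp; omega)
      have h1 := hX A (mem_TE.2 (Or.inl ⟨hA', cA⟩))
      have h2 := fD_eq A X
      have h3 : A \ X = Finset.range (3 * k) \ X := by
        ext i
        have a1 := @hA i
        have a2 := @hA' i
        simp only [Finset.mem_sdiff] at a1 ⊢
        tauto
      have h5 := Finset.card_sdiff_add_card_inter A X
      rw [h3] at h5
      have h4 : (X \ Finset.range (3 * k)).card = 0 := by omega
      have h6 : (Finset.range (3 * k) \ X).card = 0 := by omega
      rw [Finset.card_eq_zero, Finset.sdiff_eq_empty_iff_subset] at h4 h6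
      exact mem_TE.2 (Or.inr (h4.antisymm h6))

lemma TE_card_le (k : ℕ) : (3 * k).choose k ≤ (TE k).card := by
  have := Finset.card_le_card
    (show (Finset.range (3 * k)).powersetCard k ⊆ TE k from Finset.subset_union_left)
  simpa [Finset.card_powersetCard] using this

lemma TE_card_lt (k : ℕ) (hk : 1 ≤ k) : (3 * k).choose k < (TE k).card := by
  unfold TE
  rw [Finset.card_union_of_disjoint]
  · simp [Finset.card_powersetCard]
  · rw [Finset.disjoint_singleton_right, Finset.mem_powersetCard, Finset.card_range]
    omega

lemma fD_insert {m : ℕ} {A X : Finset ℕ} (hA : m ∉ A) (hX : m ∉ X) :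
    fD (insert m A) X = fD A X + 1 := by
  have h1 := fD_eq (insert m A) X
  have h2 := fD_eq A X
  rw [Finset.insert_inter_of_notMem hX, Finset.card_insert_of_notMem hA] at h1
  omega

lemma fD_insert2 {m : ℕ} {A X : Finset ℕ} (hA : m ∉ A) (hX : m ∉ X) :
    fD (insert m A) (insert m X) = fD A X := by
  have h1 := fD_eq (insert m A) (insert m X)
  have h2 := fD_eq A X
  rw [← Finset.insert_inter_distrib, Finset.card_insert_of_notMem hA,
    Finset.card_insert_of_notMem hX, Finset.card_insert_of_notMem (by simp [hA])] at h1
  omega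

lemma odd_step (d m : ℕ) (T : Finset (Finset ℕ)) (hT : FMax d T) (hm : ∀ A ∈ T, m ∉ A) :
    FMax (d + 1) (T ∪ T.image (insert m)) ∧ (T ∪ T.image (insert m)).card = 2 * T.card := by
  obtain ⟨h1, ⟨A, hA, B, hB, hAB⟩, h3⟩ := hT
  refine ⟨⟨?_, ?_, ?_⟩, ?_⟩
  · intro A hA B hB
    simp only [Finset.mem_union, Finset.mem_image] at hA hB
    rcases hA with hA | ⟨A, hA, rfl⟩ <;> rcases hB with hB | ⟨B, hB, rfl⟩ <;>
      have := h1 A hA B hB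
    · omega
    · rw [fD_comm, fD_insert (hm _ hB) (hm _ hA), fD_comm]; omega
    · rw [fD_insert (hm _ hA) (hm _ hB)]; omega
    · rw [fD_insert2 (hm _ hA) (hm _ hB)]; omega
  · exact ⟨insert m A, Finset.mem_union_right _ (Finset.mem_image_of_mem _ hA), B,
      Finset.mem_union_left _ hB, by rw [fD_insert (hm _ hA) (hm _ hB), hAB]⟩
  · intro X hX
    by_cases hmX : m ∈ X
    · refine Finset.mem_union_right _ (Finset.mem_image.2 ⟨X.erase m, ?_, Finset.insert_erase hmX⟩)
      apply h3
      intro C hC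
      have h4 := hX C (Finset.mem_union_left _ hC)
      rw [← Finset.insert_erase hmX, fD_comm, fD_insert (by simp) (hm _ hC), fD_comm] at h4
      omega
    · refine Finset.mem_union_left _ (h3 _ ?_)
      intro C hC
      have h4 := hX _ (Finset.mem_union_right _ (Finset.mem_image_of_mem _ hC))
      rw [fD_insert (hm _ hC) hmX] at h4
      omega
  · rw [Finset.card_union_of_disjoint, Finset.card_image_of_injOn]
    · omega
    · intro A hA B hB hAB
      have := congrArg (fun s => Finset.erase s m) hAB
      simpa [Finset.erase_insert (hm _ hA), Finset.erase_insert (hm _ hB)] using this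
    · rw [Finset.disjoint_left]
      intro A hA hA'
      obtain ⟨B, hB, rfl⟩ := Finset.mem_image.1 hA'
      exact hm _ hA (Finset.mem_insert_self _ _)

lemma choose_aux (k : ℕ) : (3 * k + 1).choose k < 2 * (3 * k).choose k := by
  rcases k with _ | j
  · simp
  · rw [Nat.choose_succ_succ']
    have h := Nat.choose_succ_right_eq (3 * (j + 1)) j
    have hp : 0 < (3 * (j + 1)).choose j := Nat.choose_pos (by omega)
    have e : 3 * (j + 1) - j = (j + 1) + (j + 2) := by omega
    rw [e] at h
    have : (3 * (j + 1)).choose j < (3 * (j + 1)).choose (j + 1) := by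
      by_contra hc
      push Not at hc
      nlinarith
    omega

theorem stmt1 (d : ℕ) (hd : 1 ≤ d) :
    ∃ S : Set (ℕ → Fin 2), S.Finite ∧ IsDMaximal 2 d S ∧ (3 * d / 2).choose d < S.ncard := by
  obtain ⟨k, hk | hk⟩ := Nat.even_or_odd' d
  · obtain ⟨S, hS, hM, hc⟩ := transfer _ _ (TE_max k)
    refine ⟨S, hS, hk ▸ hM, ?_⟩
    have e : 3 * d / 2 = 3 * k := by omega
    rw [hc, e, hk, ← Nat.choose_symm (by omega), show 3 * k - 2 * k = k by omega]
    exact TE_card_lt k (by omega)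
  · obtain ⟨h1, h2⟩ := odd_step _ (3 * k) _ (TE_max k) (by
      intro A hA h
      rcases mem_TE.1 hA with ⟨hA, -⟩ | rfl
      · simpa using hA h
      · simp at h)
    obtain ⟨S, hS, hM, hc⟩ := transfer _ _ h1
    refine ⟨S, hS, hk ▸ hM, ?_⟩
    have e : 3 * d / 2 = 3 * k + 1 := by omega
    rw [hc, h2, e, hk, ← Nat.choose_symm (by omega), show 3 * k + 1 - (2 * k + 1) = k by omega]
    have := TE_card_le k
    have := choose_aux k
    omega
end

section
/- There exists d₀ such that for every integer d ≥ d₀, every d-maximal set S ⊆ [2]^∞ that contains no 1-ball satisfies |S| ≤ (4 − 10^{−10})^d. -/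
open Finset in
lemma kleit (U : Finset ℕ) : ∀ (D : ℕ) (𝒜 ℬ : Finset (Finset ℕ)),
    (∀ A ∈ 𝒜, A ⊆ U) → (∀ B ∈ ℬ, B ⊆ U) →
    (∀ A ∈ 𝒜, ∀ B ∈ ℬ, (symmDiff A B).card ≤ D) →
    (𝒜.card : ℝ) * ℬ.card ≤ (25/16) ^ U.card * 4 ^ D := by
  induction U using Finset.induction_on with
  | empty =>
    intro D 𝒜 ℬ hA hB h
    have h1 : 𝒜.card ≤ 1 := Finset.card_le_one.2 fun a ha b hb => by
      rw [Finset.subset_empty.1 (hA a ha), Finset.subset_empty.1 (hA b hb)]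
    have h2 : ℬ.card ≤ 1 := Finset.card_le_one.2 fun a ha b hb => by
      rw [Finset.subset_empty.1 (hB a ha), Finset.subset_empty.1 (hB b hb)]
    have h3 : (𝒜.card : ℝ) * ℬ.card ≤ 1 := by
      have := Nat.mul_le_mul h1 h2
      exact_mod_cast this
    have h4 : (1:ℝ) ≤ 4 ^ D := one_le_pow₀ (by norm_num)
    simpa using h3.trans h4
  | insert a U ha ih =>
    intro D 𝒜 ℬ hA hB h
    rw [Finset.card_insert_of_notMem ha]
    have sub0 : ∀ 𝒞 : Finset (Finset ℕ), (∀ A ∈ 𝒞, A ⊆ insert a U) →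
        ∀ A ∈ 𝒞.nonMemberSubfamily a, A ⊆ U := by
      intro 𝒞 h𝒞 A hA
      rw [mem_nonMemberSubfamily] at hA
      exact (Finset.subset_insert_iff_of_notMem hA.2).1 (h𝒞 A hA.1)
    have sub1 : ∀ 𝒞 : Finset (Finset ℕ), (∀ A ∈ 𝒞, A ⊆ insert a U) →
        ∀ A ∈ 𝒞.memberSubfamily a, A ⊆ U := by
      intro 𝒞 h𝒞 A hA
      rw [mem_memberSubfamily] at hA
      exact (Finset.subset_insert_iff_of_notMem hA.2).1
        ((Finset.subset_insert a A).trans (h𝒞 _ hA.1))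
    have sd1 : ∀ A B : Finset ℕ, a ∉ A → a ∉ B →
        (symmDiff A (insert a B)).card = (symmDiff A B).card + 1 := by
      intro A B h1 h2
      rw [← Finset.card_insert_of_notMem (a := a) (s := symmDiff A B)]
      · congr 1; ext i; simp only [Finset.mem_symmDiff, Finset.mem_insert]; grind
      · simp [Finset.mem_symmDiff, h1, h2]
    have sd2 : ∀ A B : Finset ℕ, a ∉ A → a ∉ B →
        (symmDiff (insert a A) (insert a B)) = (symmDiff A B) := by
      intro A B h1 h2
      ext i; simp only [Finset.mem_symmDiff, Finset.mem_insert]; grind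
    have cross : ∀ 𝒞 𝒟 : Finset (Finset ℕ), (∀ A ∈ 𝒞, A ⊆ insert a U) → (∀ B ∈ 𝒟, B ⊆ insert a U) →
        (∀ A ∈ 𝒞, ∀ B ∈ 𝒟, (symmDiff A B).card ≤ D) →
        4 * (((𝒞.nonMemberSubfamily a).card : ℝ) * (𝒟.memberSubfamily a).card)
          ≤ (25/16) ^ U.card * 4 ^ D := by
      intro 𝒞 𝒟 hC hD' hh
      have key : ∀ A ∈ 𝒞.nonMemberSubfamily a, ∀ B ∈ 𝒟.memberSubfamily a,
          (symmDiff A B).card + 1 ≤ D := by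
        intro A hA B hB
        rw [mem_nonMemberSubfamily] at hA
        rw [mem_memberSubfamily] at hB
        rw [← sd1 A B hA.2 hB.2]
        exact hh _ hA.1 _ hB.1
      cases D with
      | zero =>
        rcases Finset.eq_empty_or_nonempty (𝒞.nonMemberSubfamily a) with h1 | ⟨A, hA⟩
        · rw [h1]; simp only [Finset.card_empty, Nat.cast_zero, zero_mul, mul_zero]; positivity
        rcases Finset.eq_empty_or_nonempty (𝒟.memberSubfamily a) with h1 | ⟨B, hB⟩
        · rw [h1]; simp only [Finset.card_empty, Nat.cast_zero, zero_mul, mul_zero]; positivity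
        have := key A hA B hB
        omega
      | succ D =>
        have := ih D _ _ (sub0 𝒞 hC) (sub1 𝒟 hD') (fun A hA B hB => by
          have := key A hA B hB; omega)
        rw [pow_succ]; linarith
    have c1 := cross 𝒜 ℬ hA hB h
    have c2 := cross ℬ 𝒜 hB hA (fun A hA B hB => by rw [symmDiff_comm]; exact h B hB A hA)
    have c3 := ih D _ _ (sub0 𝒜 hA) (sub0 ℬ hB) (fun A hA B hB => by
      rw [mem_nonMemberSubfamily] at hA hB; exact h _ hA.1 _ hB.1)
    have c4 := ih D _ _ (sub1 𝒜 hA) (sub1 ℬ hB) (fun A hA B hB => by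
      rw [mem_memberSubfamily] at hA hB
      rw [← sd2 A B hA.2 hB.2]; exact h _ hA.1 _ hB.1)
    rw [← card_memberSubfamily_add_card_nonMemberSubfamily a 𝒜,
      ← card_memberSubfamily_add_card_nonMemberSubfamily a ℬ]
    push_cast
    rw [pow_succ]
    have hX : (0:ℝ) < (25/16) ^ U.card * 4 ^ D := by positivity
    have e : ((25:ℝ)/16) ^ U.card * (25/16) * 4 ^ D = 25/16 * ((25/16) ^ U.card * 4 ^ D) := by ring
    rw [e]
    generalize ((25:ℝ)/16) ^ U.card * 4 ^ D = X at *
    have p0 : (0:ℝ) ≤ (𝒜.nonMemberSubfamily a).card := by positivity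
    have p1 : (0:ℝ) ≤ (𝒜.memberSubfamily a).card := by positivity
    have q0 : (0:ℝ) ≤ (ℬ.nonMemberSubfamily a).card := by positivity
    have q1 : (0:ℝ) ≤ (ℬ.memberSubfamily a).card := by positivity
    generalize ((𝒜.nonMemberSubfamily a).card : ℝ) = a0 at *
    generalize ((𝒜.memberSubfamily a).card : ℝ) = a1 at *
    generalize ((ℬ.nonMemberSubfamily a).card : ℝ) = b0 at *
    generalize ((ℬ.memberSubfamily a).card : ℝ) = b1 at *
    have m1 : 0 ≤ (X - a0*b0) * (X - a1*b1) := mul_nonneg (by linarith) (by linarith)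
    have m2 : (4 * (a0*b1)) * (4 * (b0*a1)) ≤ X * X :=
      mul_le_mul c1 c2 (by positivity) hX.le
    have m3 : X * (a0*b0 + a1*b1) ≤ X * (17/16 * X) := by nlinarith
    have m4 := le_of_mul_le_mul_left m3 hX
    nlinarith

def Good (d : ℕ) (F : Set (Finset ℕ)) : Prop :=
  (∀ A ∈ F, ∀ B ∈ F, (symmDiff A B).card ≤ d) ∧ ∀ X : Finset ℕ, ∃ B ∈ F, d ≤ (symmDiff X B).card

lemma dcount (T : Finset (Finset ℕ)) (G : Finset ℕ) :
    ∑ A ∈ T, (A ∩ G).card = ∑ i ∈ G, (T.filter (fun A => i ∈ A)).card := by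
  have := Finset.sum_card_bipartiteAbove_eq_sum_card_bipartiteBelow
    (s := T) (t := G) (fun A i => i ∈ A)
  simp only [Finset.bipartiteAbove, Finset.bipartiteBelow] at this
  rw [← this]
  refine Finset.sum_congr rfl fun A _ => ?_
  congr 1; ext i; simp [and_comm]

lemma sdcard (A B : Finset ℕ) : (symmDiff A B).card + 2 * (A ∩ B).card = A.card + B.card := by
  have h : (symmDiff A B).card = (A \ B).card + (B \ A).card := by
    rw [symmDiff_def, Finset.sup_eq_union, Finset.card_union_of_disjoint]
    exact disjoint_sdiff_sdiff
  have h1 := Finset.card_sdiff_add_card_inter A B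
  have h2 := Finset.card_sdiff_add_card_inter B A
  rw [Finset.inter_comm B A] at h2
  omega

lemma card_le_of_good {d : ℕ} {F : Set (Finset ℕ)} (hF : Good d F) (h0 : ∅ ∈ F) {A : Finset ℕ}
    (hA : A ∈ F) : A.card ≤ d := by
  have := hF.1 A hA ∅ h0
  have h2 := sdcard A ∅
  simp at h2
  omega

lemma proc (d : ℕ) (F : Set (Finset ℕ)) (hF : Good d F) (h0 : ∅ ∈ F) :
    ∀ (t : ℕ) (Q : Finset ℕ) (T : Finset (Finset ℕ)),
      (∀ A ∈ T, A ∈ F ∧ Q ⊆ A ∧ A.card = Q.card + t) → T.card ≤ (2*d - Q.card).choose t := by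
  intro t
  induction t with
  | zero =>
    intro Q T hT
    rw [Nat.choose_zero_right]
    refine Finset.card_le_one.2 fun a ha b hb => ?_
    have h1 := hT a ha
    have h2 := hT b hb
    rw [← Finset.eq_of_subset_of_card_le h1.2.1 (by omega),
      ← Finset.eq_of_subset_of_card_le h2.2.1 (by omega)]
  | succ t ih =>
    intro Q T hT
    rcases T.eq_empty_or_nonempty with rfl | ⟨A0, hA0⟩
    · simp
    have hkt : Q.card + (t+1) ≤ d := by
      rw [← (hT A0 hA0).2.2]; exact card_le_of_good hF h0 (hT A0 hA0).1
    obtain ⟨B, hB, hQB⟩ := hF.2 Q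
    have hBd := card_le_of_good hF h0 hB
    have s1 := sdcard Q B
    have s2 := Finset.card_sdiff_add_card_inter B Q
    rw [Finset.inter_comm B Q] at s2
    obtain ⟨e, he⟩ := Nat.exists_eq_add_of_le hQB
    have hf : ∀ A ∈ T, t + 1 + e ≤ 2 * (A ∩ (B \ Q)).card := by
      intro A hA
      obtain ⟨hAF, hQA, hAc⟩ := hT A hA
      have s3 := sdcard A B
      have s4 := hF.1 A hAF B hB
      have s5 : (A ∩ B).card = (A ∩ (B \ Q)).card + (Q ∩ B).card := by
        rw [← Finset.card_union_of_disjoint]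
        · congr 1; ext i; have := @hQA i; simp only [Finset.mem_inter, Finset.mem_union, Finset.mem_sdiff]; grind
        · rw [Finset.disjoint_left]; intro i; simp only [Finset.mem_inter, Finset.mem_sdiff]; grind
      omega
    have hsum : T.card * (t+1+e) ≤ 2 * ∑ A ∈ T, (A ∩ (B \ Q)).card := by
      rw [Finset.mul_sum, ← smul_eq_mul]
      exact Finset.card_nsmul_le_sum _ _ _ hf
    rw [dcount] at hsum
    have hub : ∑ i ∈ B \ Q, (T.filter (fun A => i ∈ A)).card
        ≤ (B \ Q).card * (2*d - Q.card - 1).choose t := by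
      rw [← smul_eq_mul]
      refine Finset.sum_le_card_nsmul _ _ _ fun i hi => ?_
      have hi' := (Finset.mem_sdiff.1 hi).2
      have := ih (insert i Q) (T.filter (fun A => i ∈ A)) (by
        intro A hA
        rw [Finset.mem_filter] at hA
        obtain ⟨h1, h2, h3⟩ := hT A hA.1
        refine ⟨h1, Finset.insert_subset hA.2 h2, ?_⟩
        rw [Finset.card_insert_of_notMem hi']; omega)
      rwa [Finset.card_insert_of_notMem hi', ← Nat.sub_sub] at this
    obtain ⟨n, hn⟩ : ∃ n, 2*d - Q.card = n + 1 := ⟨2*d - Q.card - 1, by omega⟩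
    rw [hn] at hub ⊢
    simp only [Nat.add_sub_cancel] at hub
    have hch := Nat.add_one_mul_choose_eq n t
    have hβ : 2 * (B \ Q).card ≤ n + 1 + e := by omega
    have htn : t ≤ n := by omega
    set c := n.choose t
    set N := (n+1).choose (t+1)
    have h1 : T.card * (t+1+e) ≤ (n+1+e) * c := by nlinarith
    have h2 : (T.card * (t+1)) * (t+1+e) ≤ (N * (t+1)) * (t+1+e) := by
      rw [← hch]
      have : e * (t+1) ≤ e * (n+1) := Nat.mul_le_mul_left _ (by omega)
      have h3 : (n+1+e) * (t+1) ≤ (t+1+e) * (n+1) := by nlinarith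
      calc (T.card * (t+1)) * (t+1+e) = (T.card * (t+1+e)) * (t+1) := by ring
        _ ≤ (n+1+e) * c * (t+1) := Nat.mul_le_mul_right _ h1
        _ = ((n+1+e) * (t+1)) * c := by ring
        _ ≤ ((t+1+e) * (n+1)) * c := Nat.mul_le_mul_right _ h3
        _ = _ := by ring
    exact Nat.le_of_mul_le_mul_right (Nat.le_of_mul_le_mul_right h2 (by omega)) (by omega)

lemma proc_sum (d : ℕ) (F : Set (Finset ℕ)) (hF : Good d F) (h0 : ∅ ∈ F) (m : ℕ)
    (Q : Finset ℕ) (T : Finset (Finset ℕ))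
    (hT : ∀ A ∈ T, A ∈ F ∧ Q ⊆ A ∧ A.card ≤ Q.card + m) :
    T.card ≤ ∑ t ∈ Finset.range (m+1), (2*d - Q.card).choose t := by
  rw [Finset.card_eq_sum_card_fiberwise (f := fun A => A.card - Q.card) (t := Finset.range (m+1))]
  · refine Finset.sum_le_sum fun t _ => proc d F hF h0 t Q _ ?_
    intro A hA
    rw [Finset.mem_filter] at hA
    obtain ⟨h1, h2, h3⟩ := hT A hA.1
    have := Finset.card_le_card h2
    exact ⟨h1, h2, by omega⟩
  · intro A hA
    have := hT A hA
    simp only [Finset.coe_range, Set.mem_Iio]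
    omega

lemma proc_two (d : ℕ) (F : Set (Finset ℕ)) (hF : Good d F) (h0 : ∅ ∈ F)
    (Q : Finset ℕ) (T : Finset (Finset ℕ))
    (hT : ∀ A ∈ T, A ∈ F ∧ Q ⊆ A) :
    T.card ≤ 2 ^ (2*d - Q.card) := by
  rw [← Nat.sum_range_choose]
  rcases T.eq_empty_or_nonempty with rfl | ⟨A0, hA0⟩
  · simp
  refine proc_sum d F hF h0 _ Q T fun A hA => ⟨(hT A hA).1, (hT A hA).2, ?_⟩
  have := card_le_of_good hF h0 (hT A hA).1
  omega

lemma claim1_aux (d : ℕ) (F : Set (Finset ℕ)) (hF : Good d F) (h0 : ∅ ∈ F)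
    (G : Finset ℕ) (k : ℕ) (hk : 20 * k ≤ G.card) :
    ∀ (j : ℕ) (Q : Finset ℕ) (T : Finset (Finset ℕ)), Q ⊆ G → Q.card + j = k →
      (∀ A ∈ T, A ∈ F ∧ Q ⊆ A ∧ 3 * G.card ≤ 5 * (A ∩ G).card) →
      11 ^ j * T.card ≤ 20 ^ j * 2 ^ (2*d - k) := by
  intro j
  induction j with
  | zero =>
    intro Q T _ hQk hT
    have := proc_two d F hF h0 Q T (fun A hA => ⟨(hT A hA).1, (hT A hA).2.1⟩)
    simp only [Nat.add_zero] at hQk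
    simpa [hQk] using this
  | succ j ih =>
    intro Q T hQG hQk hT
    have hf : ∀ A ∈ T, 11 * G.card ≤ 20 * (A ∩ (G \ Q)).card := by
      intro A hA
      obtain ⟨_, hQA, h3⟩ := hT A hA
      have s5 : (A ∩ G).card ≤ (A ∩ (G \ Q)).card + Q.card := by
        refine le_trans (Finset.card_le_card ?_) (Finset.card_union_le _ _)
        intro i; simp only [Finset.mem_inter, Finset.mem_union, Finset.mem_sdiff]; grind
      omega
    have hsum : T.card * (11 * G.card) ≤ 20 * ∑ A ∈ T, (A ∩ (G \ Q)).card := by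
      rw [Finset.mul_sum, ← smul_eq_mul]
      exact Finset.card_nsmul_le_sum _ _ _ hf
    rw [dcount] at hsum
    have hub : ∑ i ∈ G \ Q, 11 ^ j * (T.filter (fun A => i ∈ A)).card
        ≤ (G \ Q).card * (20 ^ j * 2 ^ (2*d - k)) := by
      rw [← smul_eq_mul (a := (G \ Q).card)]
      refine Finset.sum_le_card_nsmul _ _ _ fun i hi => ?_
      have hi' := (Finset.mem_sdiff.1 hi)
      refine ih (insert i Q) (T.filter (fun A => i ∈ A)) (Finset.insert_subset hi'.1 hQG) ?_ ?_
      · rw [Finset.card_insert_of_notMem hi'.2]; omega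
      · intro A hA
        rw [Finset.mem_filter] at hA
        obtain ⟨h1, h2, h3⟩ := hT A hA.1
        exact ⟨h1, Finset.insert_subset hA.2 h2, h3⟩
    rw [← Finset.mul_sum] at hub
    have hGQ : (G \ Q).card ≤ G.card := Finset.card_le_card Finset.sdiff_subset
    have hg : 0 < G.card := by omega
    refine Nat.le_of_mul_le_mul_right (c := G.card) ?_ hg
    calc 11 ^ (j+1) * T.card * G.card = 11 ^ j * (T.card * (11 * G.card)) := by ring
      _ ≤ 11 ^ j * (20 * ∑ i ∈ G \ Q, (T.filter (fun A => i ∈ A)).card) := Nat.mul_le_mul_left _ hsum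
      _ = 20 * (11 ^ j * ∑ i ∈ G \ Q, (T.filter (fun A => i ∈ A)).card) := by ring
      _ ≤ 20 * ((G \ Q).card * (20 ^ j * 2 ^ (2*d - k))) := Nat.mul_le_mul_left _ hub
      _ ≤ 20 * (G.card * (20 ^ j * 2 ^ (2*d - k))) := by gcongr
      _ = _ := by ring

lemma claim1 (d : ℕ) (F : Set (Finset ℕ)) (hF : Good d F) (h0 : ∅ ∈ F)
    (G : Finset ℕ) (hG : d ≤ 50 * G.card) (T : Finset (Finset ℕ))
    (hT : ∀ A ∈ T, A ∈ F ∧ 3 * G.card ≤ 5 * (A ∩ G).card) :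
    (T.card : ℝ) ≤ 4 ^ d * (10/11) ^ (d/1000) := by
  have h := claim1_aux d F hF h0 G (d/1000) (by omega) (d/1000) ∅ T (by simp) (by simp)
    (fun A hA => ⟨(hT A hA).1, by simp, (hT A hA).2⟩)
  generalize hk : d/1000 = k at *
  have hk2 : 2 * d = k + (2*d - k) := by omega
  have e : 20 ^ k * 2 ^ (2*d - k) = 10 ^ k * 4 ^ d := by
    rw [show (20:ℕ) = 10 * 2 by norm_num, mul_pow, mul_assoc, ← pow_add, ← hk2, pow_mul]; norm_num
  rw [e] at h
  have h' : (11:ℝ) ^ k * T.card ≤ 10 ^ k * 4 ^ d := by exact_mod_cast h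
  rw [div_pow, ← mul_div_assoc, le_div_iff₀ (by positivity)]
  linarith

lemma good_shift {d : ℕ} {F : Set (Finset ℕ)} (hF : Good d F) (C : Finset ℕ) :
    Good d {A | symmDiff A C ∈ F} := by
  constructor
  · intro A hA B hB
    have := hF.1 _ hA _ hB
    rwa [symmDiff_symmDiff_symmDiff_comm, symmDiff_self, symmDiff_bot] at this
  · intro X
    obtain ⟨B, hB, h⟩ := hF.2 (symmDiff X C)
    refine ⟨symmDiff B C, ?_, ?_⟩
    · simpa [symmDiff_assoc] using hB
    · rwa [symmDiff_assoc, symmDiff_comm C B] at h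

lemma claim1' (d : ℕ) (F : Set (Finset ℕ)) (hF : Good d F) (C : Finset ℕ) (hC : C ∈ F)
    (G : Finset ℕ) (hGC : G ⊆ C) (hG : d ≤ 50 * G.card) (T : Finset (Finset ℕ))
    (hT : ∀ A ∈ T, A ∈ F ∧ 3 * G.card ≤ 5 * (G \ A).card) :
    (T.card : ℝ) ≤ 4 ^ d * (10/11) ^ (d/1000) := by
  have hinj : Function.Injective (fun A : Finset ℕ => symmDiff A C) := symmDiff_left_injective C
  rw [← Finset.card_image_of_injective T hinj]
  refine claim1 d _ (good_shift hF C) ?_ G hG _ ?_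
  · show symmDiff ∅ C ∈ F
    rwa [← Finset.bot_eq_empty, bot_symmDiff]
  · intro A hA
    obtain ⟨A', hA', rfl⟩ := Finset.mem_image.1 hA
    refine ⟨?_, ?_⟩
    · simpa [symmDiff_assoc] using (hT A' hA').1
    · convert (hT A' hA').2 using 3
      ext i; have := @hGC i; simp only [Finset.mem_inter, Finset.mem_symmDiff, Finset.mem_sdiff]; grind

lemma binsum (n m : ℕ) : (∑ t ∈ Finset.range (m+1), (n.choose t : ℝ)) ≤ (101/100) ^ n * 100 ^ m := by
  have h1 : (∑ t ∈ Finset.range (m+1), (n.choose t : ℝ)) ≤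
      ∑ t ∈ Finset.range (m+1), ((1/100) ^ t * (n.choose t : ℝ)) * 100 ^ m := by
    refine Finset.sum_le_sum fun t ht => ?_
    have htm : t ≤ m := by have := Finset.mem_range.1 ht; omega
    have : (1:ℝ) ≤ (1/100) ^ t * 100 ^ m := by
      rw [← Nat.sub_add_cancel htm, pow_add, mul_left_comm, ← mul_pow]
      norm_num
      exact one_le_pow₀ (by norm_num)
    nlinarith [Nat.cast_nonneg (α := ℝ) (n.choose t)]
  rw [← Finset.sum_mul] at h1
  refine h1.trans ?_
  gcongr
  have h2 := add_pow (1/100:ℝ) 1 n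
  have h3 : (101/100 : ℝ) ^ n = ∑ t ∈ Finset.range (n+1), ((1/100) ^ t * (n.choose t : ℝ)) := by
    rw [show (101/100:ℝ) = 1/100 + 1 by norm_num, h2]; simp
  rw [h3]
  have h4 : ∑ t ∈ Finset.range (n+1), ((1/100:ℝ) ^ t * (n.choose t : ℝ))
      = ∑ t ∈ Finset.range (n+1+m), ((1/100:ℝ) ^ t * (n.choose t : ℝ)) := by
    refine Finset.sum_subset (by intro i; simp; omega) ?_
    intro i _ hi
    have : n < i := by simpa using hi
    rw [Nat.choose_eq_zero_of_lt this]; simp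
  rw [h4]
  refine Finset.sum_le_sum_of_subset_of_nonneg (by intro i; simp; omega) ?_
  intros; positivity

lemma claim2 (d : ℕ) (F : Set (Finset ℕ)) (hF : Good d F) (h0 : ∅ ∈ F)
    (U : Finset ℕ) (hU : 2 * U.card ≤ 5 * d) (T : Finset (Finset ℕ))
    (hT : ∀ A ∈ T, A ∈ F ∧ 50 * (A \ U).card ≤ d) :
    (T.card : ℝ) ≤ (395/100) ^ d := by
  set P := T.image (fun A => A ∩ U)
  have hP := kleit U d P P (by
    intro A hA
    obtain ⟨A', _, rfl⟩ := Finset.mem_image.1 hA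
    exact Finset.inter_subset_right) (by
    intro A hA
    obtain ⟨A', _, rfl⟩ := Finset.mem_image.1 hA
    exact Finset.inter_subset_right) (by
    intro A hA B hB
    obtain ⟨A', hA', rfl⟩ := Finset.mem_image.1 hA
    obtain ⟨B', hB', rfl⟩ := Finset.mem_image.1 hB
    refine le_trans (Finset.card_le_card ?_) (hF.1 A' (hT A' hA').1 B' (hT B' hB').1)
    intro i; simp only [Finset.mem_inter, Finset.mem_symmDiff]; grind)
  have hW : T.card ≤ P.card * ∑ t ∈ Finset.range (d/50+1), (2*d).choose t := by
    rw [Finset.card_eq_sum_card_image (fun A => A ∩ U) T, ← smul_eq_mul]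
    refine Finset.sum_le_card_nsmul _ _ _ fun Q _ => ?_
    refine (proc_sum d F hF h0 (d/50) Q _ ?_).trans ?_
    · intro A hA
      obtain ⟨hA1, rfl⟩ := Finset.mem_filter.1 hA
      have h1 := hT A hA1
      refine ⟨h1.1, Finset.inter_subset_left, ?_⟩
      have := Finset.card_sdiff_add_card_inter A U
      omega
    · exact Finset.sum_le_sum fun t _ => Nat.choose_le_choose t (Nat.sub_le _ _)
  have hW' : (T.card : ℝ) ≤ P.card * ((101/100) ^ (2*d) * 100 ^ (d/50)) := by
    refine le_trans (b := (P.card : ℝ) * ∑ t ∈ Finset.range (d/50+1), ((2*d).choose t : ℝ)) ?_ ?_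
    · exact_mod_cast hW
    · gcongr; exact binsum _ _
  have hP2 : (P.card : ℝ) ^ 100 ≤ ((25/16) ^ 125 * 4 ^ 50) ^ d := by
    calc (P.card : ℝ) ^ 100 = ((P.card : ℝ) * P.card) ^ 50 := by ring
      _ ≤ ((25/16) ^ U.card * 4 ^ d) ^ 50 := by gcongr
      _ = (25/16) ^ (U.card * 50) * (4 ^ 50) ^ d := by
        rw [mul_pow, ← pow_mul, ← pow_mul, ← pow_mul, mul_comm d 50]
      _ ≤ (25/16) ^ (125 * d) * (4 ^ 50) ^ d := by
        refine mul_le_mul_of_nonneg_right (pow_le_pow_right₀ (by norm_num) (by omega)) (by positivity)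
      _ = _ := by rw [pow_mul, ← mul_pow]
  have hP3 : (((101/100:ℝ)) ^ (2*d) * 100 ^ (d/50)) ^ 100 ≤ ((101/100) ^ 200 * 10000) ^ d := by
    calc (((101/100:ℝ)) ^ (2*d) * 100 ^ (d/50)) ^ 100
        = (101/100) ^ (200 * d) * 100 ^ (d/50*100) := by
          rw [mul_pow, ← pow_mul, ← pow_mul]; congr 2; ring
      _ ≤ (101/100) ^ (200 * d) * 100 ^ (2 * d) := by
        refine mul_le_mul_of_nonneg_left (pow_le_pow_right₀ (by norm_num) (by omega)) (by positivity)
      _ = _ := by rw [pow_mul, pow_mul, ← mul_pow]; norm_num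
  refine le_of_pow_le_pow_left₀ (n := 100) (by norm_num) (by positivity) ?_
  calc (T.card : ℝ) ^ 100 ≤ (P.card * ((101/100) ^ (2*d) * 100 ^ (d/50))) ^ 100 := by gcongr
    _ = (P.card : ℝ) ^ 100 * ((101/100) ^ (2*d) * 100 ^ (d/50)) ^ 100 := by rw [mul_pow]
    _ ≤ ((25/16) ^ 125 * 4 ^ 50) ^ d * ((101/100) ^ 200 * 10000) ^ d := by gcongr
    _ = (((25/16) ^ 125 * 4 ^ 50) * ((101/100) ^ 200 * 10000)) ^ d := (mul_pow _ _ _).symm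
    _ ≤ ((395/100) ^ 100) ^ d := by
      gcongr
      norm_num
    _ = _ := by rw [← pow_mul, ← pow_mul, mul_comm]

lemma chain (d : ℕ) (F : Set (Finset ℕ)) (hF : Good d F) (h0 : ∅ ∈ F)
    (T : Finset (Finset ℕ)) (hT : ∀ A ∈ T, A ∈ F) (r : ℕ) :
    ((T.card : ℝ) ≤ r * (4 ^ d * (10/11) ^ (d/1000)) + (395/100) ^ d) ∨
    ∃ (U : Finset ℕ) (B : Finset (Finset ℕ)), B ⊆ T ∧ (B.card : ℝ) ≤ r * (4 ^ d * (10/11) ^ (d/1000)) ∧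
      (∀ A ∈ T, A ∉ B → 2 * U.card ≤ 5 * (A ∩ U).card) ∧ d * r ≤ 50 * U.card ∧ 2 * U.card ≤ 5 * d := by
  have hN : (0:ℝ) ≤ 4 ^ d * (10/11) ^ (d/1000) := by positivity
  induction r with
  | zero => exact Or.inr ⟨∅, ∅, by simp, by simp, by simp, by simp, by simp⟩
  | succ r ih =>
    rcases ih with h | ⟨U, B, hBT, hBc, hAB, hr, hU⟩
    · left; push_cast; linarith
    by_cases hc : ∀ A ∈ T \ B, 50 * (A \ U).card ≤ d
    · left
      have h2 := claim2 d F hF h0 U hU (T \ B) (fun A hA => ⟨hT A (Finset.mem_sdiff.1 hA).1, hc A hA⟩)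
      have h3 : (T.card : ℝ) ≤ (T \ B).card + B.card := by
        have := Finset.card_sdiff_add_card_eq_card hBT
        exact_mod_cast this.ge
      push_cast; linarith
    · right
      push Not at hc
      obtain ⟨C, hC, hCU⟩ := hc
      rw [Finset.mem_sdiff] at hC
      have hb := claim1' d F hF C (hT C hC.1) (C \ U) Finset.sdiff_subset hCU.le
        (T.filter (fun A => 3 * (C \ U).card ≤ 5 * ((C \ U) \ A).card))
        (fun A hA => ⟨hT A (Finset.mem_filter.1 hA).1, (Finset.mem_filter.1 hA).2⟩)
      have hU' : (U ∪ (C \ U)).card = U.card + (C \ U).card :=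
        Finset.card_union_of_disjoint Finset.disjoint_sdiff
      refine ⟨U ∪ (C \ U), B ∪ T.filter (fun A => 3 * (C \ U).card ≤ 5 * ((C \ U) \ A).card),
        ?_, ?_, ?_, ?_, ?_⟩
      · exact Finset.union_subset hBT (Finset.filter_subset _ _)
      · have h4 : ((B ∪ T.filter (fun A => 3 * (C \ U).card ≤ 5 * ((C \ U) \ A).card)).card : ℝ) ≤
            B.card + (T.filter (fun A => 3 * (C \ U).card ≤ 5 * ((C \ U) \ A).card)).card := by
          exact_mod_cast Finset.card_union_le _ _
        push_cast; linarith
      · intro A hA hAn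
        rw [Finset.mem_union, not_or, Finset.mem_filter, not_and] at hAn
        have h5 := hAB A hA hAn.1
        have h6 := hAn.2 hA
        have h7 := Finset.card_sdiff_add_card_inter (C \ U) A
        rw [Finset.inter_comm (C \ U) A] at h7
        have h8 : (A ∩ (U ∪ (C \ U))).card = (A ∩ U).card + (A ∩ (C \ U)).card := by
          rw [Finset.inter_union_distrib_left, Finset.card_union_of_disjoint]
          exact Finset.disjoint_sdiff.mono Finset.inter_subset_right Finset.inter_subset_right
        omega
      · rw [hU']; rw [Nat.mul_succ]; omega
      · have h5 := hAB C hC.1 hC.2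
        have h6 := Finset.card_sdiff_add_card_inter C U
        have h7 := card_le_of_good hF h0 (hT C hC.1)
        omega

lemma final_family (d : ℕ) (hd : 1 ≤ d) (F : Set (Finset ℕ)) (hF : Good d F) (h0 : ∅ ∈ F)
    (T : Finset (Finset ℕ)) (hT : ∀ A ∈ T, A ∈ F) :
    (T.card : ℝ) ≤ 126 * (4 ^ d * (10/11) ^ (d/1000)) + (395/100) ^ d := by
  rcases chain d F hF h0 T hT 126 with h | ⟨U, B, _, _, _, h1, h2⟩
  · exact_mod_cast h
  · omega

lemma asym : ∃ d₀ : ℕ, ∀ d : ℕ, d₀ ≤ d →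
    126 * ((4:ℝ) ^ d * (10/11) ^ (d/1000)) + (395/100) ^ d ≤ (4 - 1 / 10 ^ 10 : ℝ) ^ d := by
  set c : ℝ := 4 - 1 / 10 ^ 10 with hc
  have hcpos : 0 < c := by rw [hc]; norm_num
  set q : ℝ := 4 * (1 - 1/20000) with hq
  have hqpos : 0 < q := by rw [hq]; norm_num
  have ht := tendsto_pow_atTop_nhds_zero_of_lt_one (r := q / c) (by positivity)
    (by rw [div_lt_one hcpos, hc, hq]; norm_num)
  have hev := ht.eventually (ge_mem_nhds (show (0:ℝ) < 1/200 by norm_num))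
  obtain ⟨d₀, h⟩ := Filter.eventually_atTop.1 hev
  refine ⟨d₀, fun d hd => ?_⟩
  have h1 := h d hd
  rw [div_pow, div_le_iff₀ (by positivity)] at h1
  have h2 : ((10:ℝ)/11) ^ (d/1000) ≤ 11/10 * (1 - 1/20000) ^ d := by
    have b : (10/11:ℝ) ≤ (1 - 1/20000) ^ 1000 := by
      have := one_add_mul_le_pow (a := (-1/20000:ℝ)) (by norm_num) 1000
      refine le_trans (by norm_num) (this.trans (le_of_eq ?_))
      congr 1; norm_num
    have e1 : ((10:ℝ)/11) ^ (d/1000 + 1) ≤ (1 - 1/20000) ^ d := by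
      calc ((10:ℝ)/11) ^ (d/1000 + 1) ≤ ((1 - 1/20000) ^ 1000) ^ (d/1000+1) := by gcongr
        _ = (1 - 1/20000) ^ (1000 * (d/1000+1)) := by rw [← pow_mul]
        _ ≤ _ := pow_le_pow_of_le_one (by norm_num) (by norm_num) (by omega)
    rw [pow_succ] at e1
    linarith
  have h3 : ((395:ℝ)/100) ^ d ≤ q ^ d := by
    gcongr
    rw [hq]; norm_num
  have h4 : (4:ℝ) ^ d * (10/11) ^ (d/1000) ≤ 11/10 * q ^ d := by
    calc (4:ℝ) ^ d * (10/11) ^ (d/1000) ≤ 4 ^ d * (11/10 * (1 - 1/20000) ^ d) := by gcongr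
      _ = _ := by rw [hq, mul_pow]; ring
  have h5 : 0 < q ^ d := by positivity
  clear_value c q
  generalize q ^ d = y at *
  generalize c ^ d = z at *
  linarith

lemma hDist_triangle (a b c : ℕ → Fin 2) : hDist 2 a c ≤ hDist 2 a b + hDist 2 b c := by
  unfold hDist
  refine le_trans (Set.encard_le_encard ?_) (Set.encard_union_le _ _)
  intro i hi
  simp only [Set.mem_setOf_eq, Set.mem_union] at hi ⊢
  by_contra hcon
  push Not at hcon
  exact hi (hcon.1.trans hcon.2)

lemma hDist_flip (x y z : ℕ → Fin 2) (A B : Finset ℕ) (hA : ∀ i, i ∈ A ↔ y i ≠ x i)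
    (hB : ∀ i, i ∈ B ↔ z i ≠ x i) : hDist 2 y z = ((symmDiff A B).card : ℕ∞) := by
  unfold hDist
  rw [← Set.encard_coe_eq_coe_finsetCard]
  congr 1
  ext i
  simp only [Set.mem_setOf_eq, Finset.coe_symmDiff, Set.mem_symmDiff, Finset.mem_coe, hA, hB]
  generalize x i = p
  generalize y i = q
  generalize z i = r
  revert p q r
  decide

def flipW (x : ℕ → Fin 2) (A : Finset ℕ) : ℕ → Fin 2 := fun i => if i ∈ A then x i + 1 else x i

lemma mem_flipW (x : ℕ → Fin 2) (A : Finset ℕ) (i : ℕ) : i ∈ A ↔ flipW x A i ≠ x i := by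
  unfold flipW
  by_cases h : i ∈ A
  · simp only [h, if_true, true_iff]
    generalize x i = p
    revert p; decide
  · simp [h]

theorem stmt2 :
    ∃ d₀ : ℕ, ∀ d : ℕ, d₀ ≤ d → ∀ S : Set (ℕ → Fin 2),
      IsDMaximal 2 d S → ¬ ContainsBall 2 S 1 →
      S.Finite ∧ (S.ncard : ℝ) ≤ (4 - 1 / 10 ^ 10 : ℝ) ^ d := by
  obtain ⟨d₀, hd₀⟩ := asym
  refine ⟨max d₀ 1, fun d hd S hS hball => ?_⟩
  obtain ⟨hdiam, ⟨x, hx, _⟩, hmax⟩ := hS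
  have hfar : ∀ y : ℕ → Fin 2, ∃ b ∈ S, (d : ℕ∞) ≤ hDist 2 y b := by
    intro y
    by_contra hcon
    push Not at hcon
    refine hball ⟨y, fun z hz => hmax z fun s hs => ?_⟩
    have h1 : hDist 2 y s + 1 ≤ (d : ℕ∞) := Order.add_one_le_of_lt (hcon s hs)
    have h2 : hDist 2 z y ≤ 1 := by simpa [hBall] using hz
    calc hDist 2 z s ≤ hDist 2 z y + hDist 2 y s := hDist_triangle _ _ _
      _ ≤ 1 + hDist 2 y s := by gcongr
      _ ≤ d := by rwa [add_comm]
  have hfin : ∀ s ∈ S, {i | s i ≠ x i}.Finite := by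
    intro s hs
    have := hdiam s hs x hx
    exact Set.finite_of_encard_le_coe this
  classical
  let Φ : (ℕ → Fin 2) → Finset ℕ := fun s => if h : {i | s i ≠ x i}.Finite then h.toFinset else ∅
  have hΦ : ∀ s ∈ S, ∀ i, i ∈ Φ s ↔ s i ≠ x i := by
    intro s hs i
    simp only [Φ, dif_pos (hfin s hs)]
    simp
  have hinj : Set.InjOn Φ S := by
    intro s hs s' hs' heq
    funext i
    have h1 := hΦ s hs i
    have h2 := hΦ s' hs' i
    rw [heq, h2] at h1
    revert h1
    generalize s i = p
    generalize s' i = q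
    generalize x i = r
    revert p q r; decide
  have hgood : Good d (Φ '' S) := by
    constructor
    · rintro _ ⟨s, hs, rfl⟩ _ ⟨s', hs', rfl⟩
      have := hdiam s hs s' hs'
      rw [hDist_flip x s s' _ _ (hΦ s hs) (hΦ s' hs')] at this
      exact_mod_cast this
    · intro X
      obtain ⟨b, hb, h⟩ := hfar (flipW x X)
      refine ⟨Φ b, ⟨b, hb, rfl⟩, ?_⟩
      rw [hDist_flip x _ b _ _ (mem_flipW x X) (hΦ b hb)] at h
      exact_mod_cast h
  have h0 : ∅ ∈ Φ '' S := by
    refine ⟨x, hx, ?_⟩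
    ext i
    rw [hΦ x hx]; simp
  have hbound : ∀ T : Finset (Finset ℕ), (T : Set (Finset ℕ)) ⊆ Φ '' S →
      (T.card : ℝ) ≤ (4 - 1 / 10 ^ 10 : ℝ) ^ d := fun T hT =>
    (final_family d (le_trans (le_max_right _ _) hd) _ hgood h0 T (fun A hA => hT hA)).trans
      (hd₀ d (le_trans (le_max_left _ _) hd))
  have hfinI : (Φ '' S).Finite := by
    by_contra hinf
    obtain ⟨N, hN⟩ := exists_nat_gt ((4 - 1 / 10 ^ 10 : ℝ) ^ d)
    obtain ⟨T, hT, hTc⟩ := Set.Infinite.exists_subset_card_eq hinf N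
    have := hbound T hT
    rw [hTc] at this
    linarith
  refine ⟨Set.Finite.of_finite_image hfinI hinj, ?_⟩
  rw [← Set.ncard_image_of_injOn hinj, Set.ncard_eq_toFinset_card _ hfinI]
  exact hbound _ (by simp)
end

section
/- For every integer n ≥ 2 and every integer L ≥ 0 there exists a constant C = C(L,n) such that for every integer d ≥ 1, every integer ℓ ≥ 0, and every d-maximal set S ⊆ [n]^∞ containing no (L+1)-ball, the set S^{(ℓ)} is finite and |S^{(ℓ)}| ≤ C·d^{2L+2}·(n + 8·n^{2/3})^d. -/
/-- `S^(ℓ)`: centers of `ℓ`-balls contained in `S` that are not contained in any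
`(ℓ+1)`-ball inside `S`. -/
def Sell (n : ℕ) (S : Set (ℕ → Fin n)) (ℓ : ℕ) : Set (ℕ → Fin n) :=
  {a ∈ S | hBall n a ℓ ⊆ S ∧
    ¬ ∃ b, hBall n a ℓ ⊆ hBall n b (ℓ + 1) ∧ hBall n b (ℓ + 1) ⊆ S}

lemma hDist_comm' (n : ℕ) (a b : ℕ → Fin n) : hDist n a b = hDist n b a := by
  unfold hDist; congr 1; ext i; exact ne_comm

lemma hDist_tri (n : ℕ) (a b c : ℕ → Fin n) : hDist n a c ≤ hDist n a b + hDist n b c := by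
  unfold hDist
  refine le_trans (Set.encard_le_encard ?_) (Set.encard_union_le _ _)
  intro i hi
  by_contra h
  simp only [Set.mem_union, Set.mem_ofPred_eq, not_or, not_not] at h
  exact hi (h.1.trans h.2)

lemma exists_other (n : ℕ) (hn : 2 ≤ n) (a : Fin n) : ∃ b : Fin n, b ≠ a := by
  have : Nontrivial (Fin n) := Fin.nontrivial_iff_two_le.mpr hn
  exact exists_ne a

lemma ball_dist (n d k : ℕ) (hn : 2 ≤ n) (S : Set (ℕ → Fin n))
    (hS : ∀ a ∈ S, ∀ b ∈ S, hDist n a b ≤ (d : ℕ∞)) (a : ℕ → Fin n)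
    (hb : hBall n a k ⊆ S) (t : ℕ → Fin n) (ht : t ∈ S) : hDist n a t + k ≤ d := by
  have ha : a ∈ S := hb (by simp [hBall, hDist])
  have hfin : {i | a i ≠ t i}.Finite := by
    apply Set.finite_of_encard_le_coe (hS a ha t ht)
  have hinf : ({i | a i ≠ t i}ᶜ).Infinite := hfin.infinite_compl
  obtain ⟨K, hK, hKc⟩ := hinf.exists_subset_card_eq k
  choose o ho using exists_other n hn
  let b : ℕ → Fin n := fun i => if i ∈ K then o (a i) else a i
  have hba : {i | b i ≠ a i} = (K : Set ℕ) := by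
    ext i
    by_cases h : i ∈ K <;> simp [b, h, ho]
  have hbS : b ∈ S := by
    apply hb
    simp only [hBall, Set.mem_ofPred_eq, hDist]
    rw [hba, Set.encard_coe_eq_coe_finsetCard, hKc]
  have hbt : {i | b i ≠ t i} = {i | a i ≠ t i} ∪ (K : Set ℕ) := by
    ext i
    by_cases h : i ∈ K
    · have h2 := hK h
      simp only [Set.mem_compl_iff, Set.mem_ofPred_eq, not_not] at h2
      simp [b, h, ← h2, ho]
    · simp [b, h]
  have h1 := hS b hbS t ht
  unfold hDist at h1 ⊢
  rw [hbt, Set.encard_union_eq, Set.encard_coe_eq_coe_finsetCard, hKc] at h1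
  · exact h1
  · exact (Set.subset_compl_iff_disjoint_left.mp hK)

lemma step_exists (n d ℓ L : ℕ) (hn : 2 ≤ n) (S : Set (ℕ → Fin n)) (hS : IsDMaximal n d S)
    (hL : ¬ ContainsBall n S (L + 1)) (w t0 : ℕ → Fin n) (ht0 : t0 ∈ S)
    (hw : {i | w i ≠ t0 i}.Finite) :
    ∃ t ∈ S, {i | w i ≠ t i}.Finite ∧ ∀ a ∈ Sell n S ℓ,
      {i | a i ≠ t i}.Finite ∧ {i | a i ≠ w i}.Finite ∧
      {i | a i ≠ t i}.ncard ≤ {i | w i ≠ t i}.ncard + L ∧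
      (a ≠ w → {i | a i ≠ t i}.ncard < {i | w i ≠ t i}.ncard + {i | a i ≠ w i}.ncard) := by
  obtain ⟨h1, h2, h3⟩ := hS
  have fS : ∀ a ∈ S, ∀ b ∈ S, {i | a i ≠ b i}.Finite := fun a ha b hb =>
    Set.finite_of_encard_le_coe (h1 a ha b hb)
  have ftri : ∀ a b c : ℕ → Fin n, {i | a i ≠ b i}.Finite → {i | b i ≠ c i}.Finite →
      {i | a i ≠ c i}.Finite := by
    intro a b c hab hbc
    refine (hab.union hbc).subset ?_
    intro i hi
    by_contra h
    simp only [Set.mem_union, Set.mem_ofPred_eq, not_or, not_not] at h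
    exact hi (h.1.trans h.2)
  have fsymm : ∀ a b : ℕ → Fin n, {i | a i ≠ b i}.Finite → {i | b i ≠ a i}.Finite := by
    intro a b h
    refine h.subset ?_
    intro i hi; exact Ne.symm hi
  have fw : ∀ t ∈ S, {i | w i ≠ t i}.Finite := fun t ht => ftri _ _ _ hw (fS _ ht0 _ ht)
  have cast : ∀ a b : ℕ → Fin n, {i | a i ≠ b i}.Finite →
      hDist n a b = (({i | a i ≠ b i}.ncard : ℕ) : ℕ∞) := by
    intro a b h
    unfold hDist
    exact h.cast_ncard_eq.symm
  let Q : Set ℕ := {k | ∃ t ∈ S, {i | w i ≠ t i}.ncard = k}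
  have hQne : Q.Nonempty := ⟨_, t0, ht0, rfl⟩
  have hQb : BddAbove Q := by
    refine ⟨{i | w i ≠ t0 i}.ncard + d, ?_⟩
    rintro k ⟨t, ht, rfl⟩
    have := hDist_tri n w t0 t
    have h4 := this.trans (add_le_add_right (h1 t0 ht0 t ht) _)
    rw [cast _ _ (fw t ht), cast _ _ hw] at h4
    exact_mod_cast h4
  obtain ⟨t, ht, htM⟩ := Nat.sSup_mem hQne hQb
  have hmax : ∀ s ∈ S, {i | w i ≠ s i}.ncard ≤ {i | w i ≠ t i}.ncard := by
    intro s hs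
    rw [htM]
    exact le_csSup hQb ⟨s, hs, rfl⟩
  refine ⟨t, ht, fw t ht, ?_⟩
  intro a ha
  obtain ⟨haS, hab, hnb⟩ := ha
  have hat := ball_dist n d ℓ hn S h1 a hab t ht
  have fat := fS a haS t ht
  have faw : {i | a i ≠ w i}.Finite := ftri _ _ _ (fS a haS t0 ht0) (fsymm _ _ hw)
  rw [cast _ _ fat] at hat
  have hat' : {i | a i ≠ t i}.ncard + ℓ ≤ d := by exact_mod_cast hat
  refine ⟨fat, faw, ?_, ?_⟩
  · have hM : d ≤ {i | w i ≠ t i}.ncard + L := by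
      by_contra hcon
      push Not at hcon
      apply hL
      refine ⟨w, ?_⟩
      intro x hx
      apply h3
      intro s hs
      have hx' : hDist n x w ≤ ((L + 1 : ℕ) : ℕ∞) := hx
      have h4 := (hDist_tri n x w s).trans (add_le_add_left hx' _)
      rw [cast _ _ (fw s hs)] at h4
      refine h4.trans ?_
      have := hmax s hs
      exact_mod_cast (by omega : L + 1 + {i | w i ≠ s i}.ncard ≤ d)
    omega
  · intro haw
    by_contra hcon
    push Not at hcon
    apply hnb
    obtain ⟨i0, hi0⟩ := Function.ne_iff.mp haw
    let b := Function.update a i0 (w i0)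
    have hbw : {i | b i ≠ w i} = {i | a i ≠ w i} \ {i0} := by
      ext i
      by_cases h : i = i0
      · subst h; simp [b]
      · simp [b, h]
    have hba : {i | a i ≠ b i} = {i0} := by
      ext i
      by_cases h : i = i0
      · subst h; simp [b, hi0]
      · simp [b, h]
    have hab1 : hDist n a b = 1 := by
      unfold hDist; rw [hba]; simp
    have hbwc : {i | b i ≠ w i}.ncard + 1 = {i | a i ≠ w i}.ncard := by
      rw [hbw]; exact Set.ncard_sdiff_singleton_add_one hi0 faw
    have fbw : {i | b i ≠ w i}.Finite := by rw [hbw]; exact faw.subset Set.sdiff_subset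
    refine ⟨b, ?_, ?_⟩
    · intro x hx
      have hx' : hDist n x a ≤ (ℓ : ℕ∞) := hx
      have h4 := (hDist_tri n x a b).trans (add_le_add_left hx' _)
      rw [hab1] at h4
      show hDist n x b ≤ ((ℓ + 1 : ℕ) : ℕ∞)
      exact_mod_cast h4
    · intro x hx
      apply h3
      intro s hs
      have hx' : hDist n x b ≤ ((ℓ + 1 : ℕ) : ℕ∞) := hx
      have h4 := (hDist_tri n x b s).trans (add_le_add hx' (hDist_tri n b w s))
      rw [cast _ _ (fw s hs), cast _ _ fbw] at h4
      refine h4.trans ?_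
      have := hmax s hs
      exact_mod_cast (by omega : ℓ + 1 + ({i | b i ≠ w i}.ncard + {i | w i ≠ s i}.ncard) ≤ d)

lemma out_bound (n : ℕ) (t0 t1 a : ℕ → Fin n) (D : Finset ℕ)
    (hD : ∀ i, i ∈ D ↔ t0 i ≠ t1 i)
    (h0 : hDist n a t0 ≤ (D.card : ℕ∞)) (h1 : hDist n a t1 ≤ (D.card : ℕ∞)) :
    {i | i ∉ D ∧ a i ≠ t0 i}.Finite ∧
    2 * {i | i ∉ D ∧ a i ≠ t0 i}.ncard ≤ (D.filter (fun i => a i = t0 i ∨ a i = t1 i)).card := by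
  have f0 : {i | a i ≠ t0 i}.Finite := Set.finite_of_encard_le_coe h0
  have f1 : {i | a i ≠ t1 i}.Finite := Set.finite_of_encard_le_coe h1
  have fo : {i | i ∉ D ∧ a i ≠ t0 i}.Finite := f0.subset (fun i hi => hi.2)
  refine ⟨fo, ?_⟩
  have c0 : {i | a i ≠ t0 i}.ncard ≤ D.card := by
    unfold hDist at h0; rw [← f0.cast_ncard_eq] at h0; exact_mod_cast h0
  have c1 : {i | a i ≠ t1 i}.ncard ≤ D.card := by
    unfold hDist at h1; rw [← f1.cast_ncard_eq] at h1; exact_mod_cast h1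
  have key : ∀ t : ℕ → Fin n, (∀ i, i ∉ D → t i = t0 i) → {i | a i ≠ t i}.Finite →
      {i | a i ≠ t i}.ncard ≤ D.card →
      {i | i ∉ D ∧ a i ≠ t0 i}.ncard ≤ (D.filter (fun i => a i = t i)).card := by
    intro t ht ft ct
    have e : {i | i ∉ D ∧ a i ≠ t0 i} ∪ ((D.filter (fun i => ¬ a i = t i) : Finset ℕ) : Set ℕ)
        ⊆ {i | a i ≠ t i} := by
      rintro i (hi | hi)
      · have := ht i hi.1
        simp only [Set.mem_ofPred_eq, this]; exact hi.2
      · simp at hi; exact hi.2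
    have e2 := Set.ncard_le_ncard e ft
    rw [Set.ncard_union_eq _ fo (Finset.finite_toSet _), Set.ncard_coe_finset] at e2
    · have := Finset.card_filter_add_card_filter_not (s := D) (fun i => a i = t i)
      omega
    · rw [Set.disjoint_left]
      intro i hi hi2
      simp at hi2
      exact hi.1 hi2.1
  have k0 := key t0 (fun _ _ => rfl) f0 c0
  have k1 := key t1 (fun i hi => by have := (hD i).not.mp hi; push Not at this; exact this.symm) f1 c1
  have hdis : Disjoint (D.filter (fun i => a i = t0 i)) (D.filter (fun i => a i = t1 i)) := by
    rw [Finset.disjoint_left]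
    intro i hi hi2
    simp only [Finset.mem_filter] at hi hi2
    exact (hD i).mp hi.1 (hi.2.symm.trans hi2.2)
  rw [Finset.filter_or, Finset.card_union_of_disjoint hdis]
  omega

lemma fiber_bound (n : ℕ) (T : Finset (ℕ → Fin n)) (E : Finset ℕ) (f : (E → Fin n) → ℝ)
    (h : ∀ g : E → Fin n, ((T.filter (fun a => (fun i : E => a i) = g)).card : ℝ) ≤ f g) :
    (T.card : ℝ) ≤ ∑ g, f g := by
  have := Finset.card_eq_sum_card_fiberwise (s := T) (t := (Finset.univ : Finset (E → Fin n)))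
    (f := fun a => (fun i : E => a i)) (fun _ _ => Finset.mem_coe.mpr (Finset.mem_univ _))
  rw [this]
  push_cast
  exact Finset.sum_le_sum (fun g _ => h g)

lemma sum_prod_fn (n : ℕ) (E : Finset ℕ) (φ : E → Fin n → ℝ) :
    ∑ g : E → Fin n, ∏ i, φ i (g i) = ∏ i, ∑ j, φ i j := by
  rw [Finset.prod_univ_sum, Fintype.piFinset_univ]

lemma card_filter_sub (E : Finset ℕ) (p : ℕ → Prop) [DecidablePred p] :
    (E.filter p).card = (Finset.univ.filter (fun i : E => p i)).card := by
  rw [Finset.card_filter, Finset.card_filter]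
  exact (Finset.sum_coe_sort E (fun i => if p i then 1 else 0)).symm

lemma num_step (L ρ0 : ℕ) (h0 : (81 / 16 : ℝ) ^ L ≤ (81 / 64 : ℝ) ^ ρ0) (r ρ : ℕ) (hr : r < ρ)
    (h2 : 2 * r ≤ ρ + L) :
    ((2 : ℝ) ^ ρ0) ^ (min r ρ0) * (81 / 16 : ℝ) ^ r
      ≤ ((2 : ℝ) ^ ρ0) ^ (min ρ ρ0) * (81 / 32 : ℝ) ^ ρ := by
  by_cases h : ρ ≤ ρ0
  · rw [min_eq_left h, min_eq_left (hr.le.trans h)]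
    have e1 : (81 / 16 : ℝ) ^ r = 2 ^ r * (81 / 32 : ℝ) ^ r := by
      rw [← mul_pow]; norm_num
    rw [e1, ← mul_assoc]
    have e2 : (2 : ℝ) ^ r ≤ 2 ^ ρ0 := pow_le_pow_right₀ (by norm_num) (by omega)
    have e3 : ((2 : ℝ) ^ ρ0) ^ r * 2 ^ r ≤ ((2 : ℝ) ^ ρ0) ^ ρ := by
      calc ((2 : ℝ) ^ ρ0) ^ r * 2 ^ r ≤ ((2 : ℝ) ^ ρ0) ^ r * 2 ^ ρ0 := by gcongr
        _ = ((2 : ℝ) ^ ρ0) ^ (r + 1) := by rw [pow_succ]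
        _ ≤ _ := pow_le_pow_right₀ (one_le_pow₀ (by norm_num)) hr
    have e4 : (81 / 32 : ℝ) ^ r ≤ (81 / 32 : ℝ) ^ ρ := pow_le_pow_right₀ (by norm_num) hr.le
    gcongr
  · push Not at h
    rw [min_eq_right h.le]
    have e1 : ((2 : ℝ) ^ ρ0) ^ (min r ρ0) ≤ ((2 : ℝ) ^ ρ0) ^ ρ0 :=
      pow_le_pow_right₀ (one_le_pow₀ (by norm_num)) (min_le_right _ _)
    have e2 : (81 / 16 : ℝ) ^ r ≤ (81 / 32 : ℝ) ^ ρ := by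
      have : ((81 / 16 : ℝ) ^ r) ^ 2 ≤ ((81 / 32 : ℝ) ^ ρ) ^ 2 := by
        calc ((81 / 16 : ℝ) ^ r) ^ 2 = (81 / 16 : ℝ) ^ (2 * r) := by rw [← pow_mul, mul_comm]
          _ ≤ (81 / 16 : ℝ) ^ (ρ + L) := pow_le_pow_right₀ (by norm_num) h2
          _ = (81 / 16 : ℝ) ^ ρ * (81 / 16 : ℝ) ^ L := pow_add _ _ _
          _ ≤ (81 / 16 : ℝ) ^ ρ * (81 / 64 : ℝ) ^ ρ0 := by gcongr
          _ ≤ (81 / 16 : ℝ) ^ ρ * (81 / 64 : ℝ) ^ ρ := by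
              gcongr
              norm_num
          _ = ((81 / 32 : ℝ) ^ ρ) ^ 2 := by
              rw [← mul_pow, ← pow_mul, mul_comm ρ 2, pow_mul]; norm_num
      exact le_of_sq_le_sq this (by positivity)
    gcongr

lemma core (n L m ρ0 : ℕ) (hn : 2 ≤ n) (S A : Set (ℕ → Fin n)) (t0 : ℕ → Fin n) (D : Finset ℕ)
    (h0 : (81 / 16 : ℝ) ^ L ≤ (81 / 64 : ℝ) ^ ρ0)
    (hm : ∀ t ∈ S, {i | i ∉ D ∧ t i ≠ t0 i}.Finite ∧ {i | i ∉ D ∧ t i ≠ t0 i}.ncard ≤ m)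
    (hstep : ∀ w : ℕ → Fin n, {i | w i ≠ t0 i}.Finite →
      ∃ t ∈ S, {i | w i ≠ t i}.Finite ∧ ∀ a ∈ A,
      {i | a i ≠ t i}.Finite ∧ {i | a i ≠ w i}.Finite ∧
      {i | a i ≠ t i}.ncard ≤ {i | w i ≠ t i}.ncard + L ∧
      (a ≠ w → {i | a i ≠ t i}.ncard < {i | w i ≠ t i}.ncard + {i | a i ≠ w i}.ncard)) :
    ∀ (ρ : ℕ) (x : ℝ) (F : Finset ℕ) (w : ℕ → Fin n) (T : Finset (ℕ → Fin n)), 0 < x → D ⊆ F →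
      (∀ i, i ∉ F → w i = t0 i) →
      (∀ a ∈ T, a ∈ A ∧ (∀ i ∈ F, a i = w i) ∧ {i | a i ≠ w i}.ncard = ρ) →
      (T.card : ℝ) ≤ ((2 : ℝ) ^ ρ0) ^ (min ρ ρ0) * (81 / 32 * (n / x)) ^ ρ *
        Real.exp (2 * x * m) := by
  intro ρ
  induction ρ using Nat.strong_induction_on with
  | _ ρ ih =>
  intro x F w T hx hDF hwF hT
  have hwt0 : {i | w i ≠ t0 i}.Finite := by
    refine (Finset.finite_toSet F).subset ?_
    intro i hi
    by_contra h
    exact hi (hwF i (by simpa using h))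
  obtain ⟨t, htS, fwt, ht⟩ := hstep w hwt0
  by_cases hρ : ρ = 0
  · subst hρ
    have hsub : T ⊆ {w} := by
      intro a ha
      obtain ⟨haA, -, hc⟩ := hT a ha
      rw [Set.ncard_eq_zero (ht a haA).2.1] at hc
      rw [Finset.mem_singleton]
      funext i
      by_contra h
      have : i ∈ ({i | a i ≠ w i} : Set ℕ) := h
      rw [hc] at this
      exact this
    have hc := Finset.card_le_card hsub
    rw [Finset.card_singleton] at hc
    have h1 : (T.card : ℝ) ≤ 1 := by exact_mod_cast hc
    have h2 : (1 : ℝ) ≤ Real.exp (2 * x * m) := Real.one_le_exp (by positivity)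
    simpa using h1.trans h2
  have fE : {i | i ∉ F ∧ t i ≠ t0 i}.Finite :=
    (hm t htS).1.subset (fun i hi => ⟨fun h => hi.1 (hDF h), hi.2⟩)
  let E : Finset ℕ := fE.toFinset
  have hE : ∀ i, i ∈ E ↔ i ∉ F ∧ t i ≠ t0 i := fun i => by simp [E]
  have hEc : E.card ≤ m := by
    refine le_trans ?_ (hm t htS).2
    rw [← Set.ncard_coe_finset]
    refine Set.ncard_le_ncard ?_ (hm t htS).1
    intro i hi
    have := (hE i).mp hi
    exact ⟨fun h => this.1 (hDF h), this.2⟩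
  have hn0 : (0 : ℝ) < n := by exact_mod_cast (by omega : 0 < n)
  let K : ℝ := ((2 : ℝ) ^ ρ0) ^ (min ρ ρ0) * (81 / 32 * (n / x)) ^ ρ * Real.exp (x * m)
  have hK : 0 ≤ K := by positivity
  let q : (E → Fin n) → ℕ := fun g => (Finset.univ.filter (fun i : E => ¬ g i = w i)).card
  have hfib := fiber_bound n T E (fun g => K * ∏ i : E, (if g i = w i then (1 : ℝ) else x / n)) ?_
  · rw [← Finset.mul_sum,
      sum_prod_fn n E (fun i j => if j = w i then (1 : ℝ) else x / n)] at hfib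
    refine hfib.trans ?_
    have e1 : ∀ i : E, ∑ j : Fin n, (if j = w i then (1 : ℝ) else x / n) ≤ 1 + x := by
      intro i
      have : ∀ j : Fin n, (if j = w i then (1 : ℝ) else x / n) ≤
          (if j = w i then (1 : ℝ) else 0) + x / n := by
        intro j
        have : 0 ≤ x / n := by positivity
        split_ifs <;> linarith
      refine (Finset.sum_le_sum (fun j _ => this j)).trans ?_
      rw [Finset.sum_add_distrib]
      simp
      field_simp
      exact le_refl _
    have e2 : ∏ i : E, ∑ j : Fin n, (if j = w i then (1 : ℝ) else x / n) ≤ Real.exp (x * m) := by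
      calc _ ≤ ∏ i : E, (1 + x) := by
            refine Finset.prod_le_prod (fun i _ => ?_) (fun i _ => e1 i)
            refine Finset.sum_nonneg (fun j _ => ?_)
            split_ifs <;> positivity
        _ = (1 + x) ^ E.card := by simp
        _ ≤ (1 + x) ^ m := pow_le_pow_right₀ (by linarith) hEc
        _ ≤ (Real.exp x) ^ m := by
            refine pow_le_pow_left₀ (by positivity) ?_ m
            linarith [Real.add_one_le_exp x]
        _ = Real.exp (x * m) := by rw [← Real.exp_nat_mul, mul_comm]
    calc _ ≤ K * Real.exp (x * m) := mul_le_mul_of_nonneg_left e2 hK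
      _ = _ := by
        simp only [K]
        rw [mul_assoc, ← Real.exp_add]
        congr 2; ring
  · intro g
    have hprod : ∏ i : E, (if g i = w i then (1 : ℝ) else x / n) = (x / n) ^ q g := by
      rw [Finset.prod_ite]; simp [q, div_pow]
    rw [hprod]
    let w' : ℕ → Fin n := fun i => if h : i ∈ E then g ⟨i, h⟩ else w i
    have hw'E : ∀ i : E, w' i = g i := fun i => by simp [w']
    have hw'N : ∀ i, i ∉ E → w' i = w i := fun i hi => by simp [w', hi]
    have key : ∀ a ∈ T, (fun i : E => a i) = g →
        1 ≤ q g ∧ q g ≤ ρ ∧ 2 * (ρ - q g) ≤ ρ + L ∧ (∀ i ∈ F ∪ E, a i = w' i) ∧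
        {i | a i ≠ w' i}.ncard = ρ - q g := by
      intro a haT hag
      obtain ⟨haA, haF, haρ⟩ := hT a haT
      obtain ⟨fat, faw, hhalf, hprog⟩ := ht a haA
      have haE : ∀ i : E, a i = g i := fun i => by rw [← hag]
      have hne : a ≠ w := by
        rintro rfl
        apply hρ; rw [← haρ]; simp
      have hprog := hprog hne
      let Q : Finset ℕ := E.filter (fun i => ¬ a i = w i)
      have hQ : Q.card = q g := by
        simp only [Q, q]
        rw [card_filter_sub E (fun i => ¬ a i = w i)]
        simp only [haE]
      have hdec : {i | a i ≠ w i} = (Q : Set ℕ) ∪ {i | a i ≠ w' i} := by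
        ext i
        by_cases hi : i ∈ E
        · have h1 := haE ⟨i, hi⟩
          have h2 := hw'E ⟨i, hi⟩
          simp only at h1 h2
          simp [Q, hi, h1, h2]
        · simp [Q, hi, hw'N i hi]
      have hdis : Disjoint (Q : Set ℕ) {i | a i ≠ w' i} := by
        rw [Set.disjoint_left]
        intro i hi hi2
        have hiE : i ∈ E := by
          have : i ∈ Q := hi
          exact (Finset.mem_filter.mp this).1
        exact hi2 ((haE ⟨i, hiE⟩).trans (hw'E ⟨i, hiE⟩).symm)
      have faw' : {i | a i ≠ w' i}.Finite := faw.subset (by rw [hdec]; exact Set.subset_union_right)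
      have hsum : Q.card + {i | a i ≠ w' i}.ncard = ρ := by
        rw [← haρ, hdec, Set.ncard_union_eq hdis (Finset.finite_toSet _) faw',
          Set.ncard_coe_finset]
      have hag' : ∀ i ∈ F ∪ E, a i = w' i := by
        intro i hi
        by_cases hiE : i ∈ E
        · exact (haE ⟨i, hiE⟩).trans (hw'E ⟨i, hiE⟩).symm
        · rw [hw'N i hiE]
          rcases Finset.mem_union.mp hi with h | h
          · exact haF i h
          · exact absurd h hiE
      have hoff : ∀ i, i ∉ F ∪ E → w i = t i := by
        intro i hi
        rw [Finset.mem_union, not_or] at hi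
        rw [hwF i hi.1]
        by_contra h
        exact hi.2 ((hE i).mpr ⟨hi.1, fun h' => h h'.symm⟩)
      have hcnt : {i | w i ≠ t i}.ncard + {i | a i ≠ w' i}.ncard
          ≤ {i | a i ≠ t i}.ncard + Q.card := by
        rw [← Set.ncard_union_eq _ fwt faw', ← Set.ncard_coe_finset Q]
        · refine le_trans (Set.ncard_le_ncard ?_ (fat.union (Finset.finite_toSet _)))
            (Set.ncard_union_le _ _)
          rintro i (hi | hi)
          · by_cases hat : a i = t i
            · right
              have haw : a i ≠ w i := by rw [hat]; exact Ne.symm hi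
              have hiF : i ∉ F := fun h => haw (haF i h)
              have : i ∈ Q := by
                refine Finset.mem_filter.mpr ⟨(hE i).mpr ⟨hiF, ?_⟩, haw⟩
                rw [← hwF i hiF]; exact Ne.symm hi
              exact this
            · left; exact hat
          · left
            have hiFE : i ∉ F ∪ E := fun h => hi (hag' i h)
            have hiE : i ∉ E := fun h => hiFE (Finset.mem_union_right _ h)
            have hi' : a i ≠ w' i := hi
            rw [hw'N i hiE, hoff i hiFE] at hi'
            exact hi'
        · rw [Set.disjoint_left]
          intro i hi hi2
          have hiFE : i ∉ F ∪ E := fun h => hi2 (hag' i h)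
          exact hi (hoff i hiFE)
      rw [haρ] at hprog
      refine ⟨?_, ?_, ?_, hag', ?_⟩ <;> omega
    rcases (T.filter (fun a => (fun i : E => a i) = g)).eq_empty_or_nonempty with hemp | ⟨a0, ha0⟩
    · rw [hemp]; simp; positivity
    rw [Finset.mem_filter] at ha0
    obtain ⟨hq1, hq2, hq3, -, -⟩ := key a0 ha0.1 ha0.2
    have hih := ih (ρ - q g) (by omega) (x / 2) (F ∪ E) w'
      (T.filter (fun a => (fun i : E => a i) = g)) (by positivity)
      (hDF.trans Finset.subset_union_left)
      (by
        intro i hi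
        rw [Finset.mem_union, not_or] at hi
        rw [hw'N i hi.2, hwF i hi.1])
      (by
        intro a ha
        rw [Finset.mem_filter] at ha
        obtain ⟨-, -, -, h4, h5⟩ := key a ha.1 ha.2
        exact ⟨(hT a ha.1).1, h4, h5⟩)
    refine hih.trans ?_
    have hnum := num_step L ρ0 h0 (ρ - q g) ρ (by omega) hq3
    obtain ⟨r, hr⟩ : ∃ r, ρ - q g = r := ⟨_, rfl⟩
    rw [hr] at hnum ⊢
    have hρr : ρ = r + q g := by omega
    have e1 : (81 / 32 * (n / (x / 2)) : ℝ) ^ r = (81 / 16) ^ r * (n / x) ^ r := by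
      rw [← mul_pow]; congr 1; field_simp; norm_num
    have e2 : ((n : ℝ) / x) ^ ρ * (x / n) ^ q g = (n / x) ^ r := by
      rw [hρr, pow_add, mul_assoc, ← mul_pow]
      have : (n : ℝ) / x * (x / n) = 1 := by field_simp
      rw [this]; simp
    have e3 : Real.exp (2 * (x / 2) * m) = Real.exp (x * m) := by congr 1; ring
    simp only [K]
    rw [e1, e3, mul_pow]
    calc _ = (((2 : ℝ) ^ ρ0) ^ (min r ρ0) * (81 / 16 : ℝ) ^ r) * ((n / x) ^ r * Real.exp (x * m)) := by
            ring
      _ ≤ (((2 : ℝ) ^ ρ0) ^ (min ρ ρ0) * (81 / 32 : ℝ) ^ ρ) * ((n / x) ^ r * Real.exp (x * m)) := by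
            gcongr
      _ = _ := by rw [← e2]; ring

lemma num_final (y : ℝ) (hy : 5 / 4 ≤ y) :
    (y ^ 3 + 2 * (9 / 4 * y ^ 2)) * Real.exp (1 / (2 * y)) ≤ y ^ 3 + 8 * y ^ 2 := by
  have hy0 : 0 < y := by linarith
  have hx : 1 / (2 * y) ≤ 1 := by
    rw [div_le_one (by positivity)]; linarith
  have h0 : 0 ≤ 1 / (2 * y) := by positivity
  have he : Real.exp (1 / (2 * y)) ≤ 1 + 1 / (2 * y) + (1 / (2 * y)) ^ 2 := by
    have := Real.abs_exp_sub_one_sub_id_le (x := 1 / (2 * y)) (by rw [abs_of_nonneg h0]; exact hx)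
    have := (abs_le.mp this).2
    linarith
  refine (mul_le_mul_of_nonneg_left he (by positivity)).trans ?_
  have : (y ^ 3 + 2 * (9 / 4 * y ^ 2)) * (1 + 1 / (2 * y) + (1 / (2 * y)) ^ 2)
      = y ^ 3 + 5 * y ^ 2 + 5 / 2 * y + 9 / 8 := by
    field_simp; ring
  rw [this]
  nlinarith

theorem stmt3 (n L : ℕ) (hn : 2 ≤ n) :
    ∃ C : ℝ, 0 < C ∧
      ∀ d : ℕ, 1 ≤ d → ∀ ℓ : ℕ, ∀ S : Set (ℕ → Fin n),
        IsDMaximal n d S → ¬ ContainsBall n S (L + 1) →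
        (Sell n S ℓ).Finite ∧
          ((Sell n S ℓ).ncard : ℝ) ≤
            C * (d : ℝ) ^ (2 * L + 2) * ((n : ℝ) + 8 * (n : ℝ) ^ ((2 : ℝ) / 3)) ^ d := by
  obtain ⟨ρ0, hρ0⟩ := pow_unbounded_of_one_lt ((81 / 16 : ℝ) ^ L) (by norm_num : (1 : ℝ) < 81 / 64)
  have hn0 : (0 : ℝ) < n := by exact_mod_cast (by omega : 0 < n)
  have hn2 : (2 : ℝ) ≤ n := by exact_mod_cast hn
  obtain ⟨y, hy⟩ : ∃ y : ℝ, y = (n : ℝ) ^ ((1 : ℝ) / 3) := ⟨_, rfl⟩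
  have hy0 : 0 < y := by rw [hy]; positivity
  have hy3 : y ^ 3 = n := by
    rw [hy, ← Real.rpow_natCast, ← Real.rpow_mul hn0.le]; norm_num
  have hy2 : (n : ℝ) ^ ((2 : ℝ) / 3) = y ^ 2 := by
    rw [hy, ← Real.rpow_natCast, ← Real.rpow_mul hn0.le]; norm_num
  have hy1 : 5 / 4 ≤ y := by
    by_contra h
    push Not at h
    have : y ^ 3 ≤ (5 / 4) ^ 3 := pow_le_pow_left₀ hy0.le h.le 3
    rw [hy3] at this
    norm_num at this
    linarith
  let J : ℝ := ((2 : ℝ) ^ ρ0) ^ ρ0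
  have hJ : 0 < J := by positivity
  refine ⟨2 * J, by positivity, ?_⟩
  intro d hd ℓ S hS hL
  set B : ℝ := 2 * J * (d : ℝ) ^ (2 * L + 2) * ((n : ℝ) + 8 * (n : ℝ) ^ ((2 : ℝ) / 3)) ^ d with hB
  suffices hmain : ∀ T : Finset (ℕ → Fin n), (T : Set (ℕ → Fin n)) ⊆ Sell n S ℓ →
      (T.card : ℝ) ≤ B by
    have hfin : (Sell n S ℓ).Finite := by
      by_contra hinf
      obtain ⟨T, hT, hTc⟩ := Set.Infinite.exists_subset_card_eq hinf (⌊B⌋₊ + 1)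
      have h1 := hmain T hT
      rw [hTc] at h1
      have h2 := Nat.lt_floor_add_one B
      push_cast at h1
      linarith
    refine ⟨hfin, ?_⟩
    rw [Set.ncard_eq_toFinset_card _ hfin]
    exact hmain _ (by simp)
  intro T hT
  obtain ⟨h1, ⟨t0, ht0, t1, ht1, h01⟩, h3⟩ := id hS
  have fD : {i | t0 i ≠ t1 i}.Finite := Set.finite_of_encard_le_coe h01.le
  let D : Finset ℕ := fD.toFinset
  have hD : ∀ i, i ∈ D ↔ t0 i ≠ t1 i := fun i => by simp [D]
  have hDc : D.card = d := by
    have : hDist n t0 t1 = (D.card : ℕ∞) := by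
      unfold hDist
      rw [← Set.encard_coe_eq_coe_finsetCard]
      simp [D]
    rw [this] at h01
    exact_mod_cast h01
  have hout : ∀ a ∈ S, {i | i ∉ D ∧ a i ≠ t0 i}.Finite ∧
      2 * {i | i ∉ D ∧ a i ≠ t0 i}.ncard ≤ (D.filter (fun i => a i = t0 i ∨ a i = t1 i)).card := by
    intro a ha
    exact out_bound n t0 t1 a D hD (by rw [hDc]; exact h1 a ha t0 ht0)
      (by rw [hDc]; exact h1 a ha t1 ht1)
  have hout2 : ∀ a ∈ S, 2 * {i | i ∉ D ∧ a i ≠ t0 i}.ncard ≤ d := by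
    intro a ha
    refine (hout a ha).2.trans ?_
    rw [← hDc]; exact Finset.card_filter_le _ _
  have hcore := core n L (d / 2) ρ0 hn S (Sell n S ℓ) t0 D hρ0.le
    (fun t ht => ⟨(hout t ht).1, by have := hout2 t ht; omega⟩)
    (fun w hw => step_exists n d ℓ L hn S hS hL w t0 ht0 hw)
  let x : ℝ := 1 / (2 * y)
  have hx : 0 < x := by positivity
  let s : ℝ := 9 / 4 * y ^ 2
  have hs1 : 1 ≤ s := by simp only [s]; nlinarith
  have hs : 81 / 32 * (n / x) = s ^ 2 := by
    simp only [s, x]; rw [← hy3]; field_simp; ring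
  have hexp : Real.exp (2 * x * ((d / 2 : ℕ) : ℝ)) ≤ Real.exp x ^ d := by
    rw [← Real.exp_nat_mul]
    apply Real.exp_le_exp.mpr
    have : ((d / 2 : ℕ) : ℝ) ≤ d / 2 := Nat.cast_div_le
    nlinarith
  let P : (D → Fin n) → ℝ := fun g => ∏ i : D, (if g i = t0 i ∨ g i = t1 i then s else 1)
  have hP : ∀ g, 0 ≤ P g := fun g => Finset.prod_nonneg (fun i _ => by split_ifs <;> positivity)
  have hfib := fiber_bound n T D (fun g => ((d + 1 : ℝ) * (J * Real.exp x ^ d)) * P g) ?_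
  · rw [← Finset.mul_sum] at hfib
    simp only [P] at hfib
    rw [sum_prod_fn n D (fun i j => if j = t0 i ∨ j = t1 i then s else 1)] at hfib
    have e1 : ∀ i : D, ∑ j : Fin n, (if j = t0 i ∨ j = t1 i then s else 1) ≤ n + 2 * s := by
      intro i
      have : ∀ j : Fin n, (if j = t0 i ∨ j = t1 i then s else 1) ≤
          ((if j = t0 i then s else 0) + (if j = t1 i then s else 0)) + 1 := by
        intro j
        by_cases ha : j = t0 i <;> by_cases hb : j = t1 i <;> simp only [ha, hb] <;>
          split_ifs <;> first | linarith | tauto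
      refine (Finset.sum_le_sum (fun j _ => this j)).trans ?_
      rw [Finset.sum_add_distrib, Finset.sum_add_distrib]
      simp
      linarith
    have e2 : ∏ i : D, ∑ j : Fin n, (if j = t0 i ∨ j = t1 i then s else 1) ≤ (n + 2 * s) ^ d := by
      calc _ ≤ ∏ i : D, (n + 2 * s) := by
            refine Finset.prod_le_prod (fun i _ => ?_) (fun i _ => e1 i)
            refine Finset.sum_nonneg (fun j _ => ?_)
            split_ifs <;> positivity
        _ = (n + 2 * s) ^ d := by simp [hDc]
    refine hfib.trans ?_
    have hd1 : (1 : ℝ) ≤ d := by exact_mod_cast hd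
    have hdp : (d : ℝ) + 1 ≤ 2 * (d : ℝ) ^ (2 * L + 2) := by
      have : (d : ℝ) ^ 1 ≤ (d : ℝ) ^ (2 * L + 2) := pow_le_pow_right₀ hd1 (by omega)
      rw [pow_one] at this
      linarith
    have hnf := num_final y hy1
    rw [hB, hy2]
    calc _ ≤ ((d + 1 : ℝ) * (J * Real.exp x ^ d)) * (n + 2 * s) ^ d :=
          mul_le_mul_of_nonneg_left e2 (by positivity)
      _ = (d + 1 : ℝ) * (J * ((n + 2 * s) * Real.exp x) ^ d) := by rw [mul_pow]; ring
      _ ≤ (2 * (d : ℝ) ^ (2 * L + 2)) * (J * (n + 8 * y ^ 2) ^ d) := by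
          have : (n + 2 * s) * Real.exp x ≤ n + 8 * y ^ 2 := by rw [← hy3]; exact hnf
          gcongr
      _ = _ := by ring
  · intro g
    let w : ℕ → Fin n := fun i => if h : i ∈ D then g ⟨i, h⟩ else t0 i
    have hwD : ∀ i : D, w i = g i := fun i => by simp [w]
    have hwN : ∀ i, i ∉ D → w i = t0 i := fun i hi => by simp [w, hi]
    set Tg := T.filter (fun a => (fun i : D => a i) = g) with hTg
    have hTgA : ∀ a ∈ Tg, a ∈ Sell n S ℓ ∧ (∀ i ∈ D, a i = w i) ∧
        {i | a i ≠ w i} = {i | i ∉ D ∧ a i ≠ t0 i} := by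
      intro a ha
      rw [hTg, Finset.mem_filter] at ha
      have haD : ∀ i ∈ D, a i = w i := by
        intro i hi
        have := hwD ⟨i, hi⟩
        rw [← ha.2] at this
        exact this.symm
      refine ⟨hT ha.1, haD, ?_⟩
      ext i
      by_cases hi : i ∈ D
      · simp [hi, haD i hi]
      · simp [hi, hwN i hi]
    have hcard := Finset.card_eq_sum_card_fiberwise (s := Tg) (t := Finset.range (d + 1))
      (f := fun a => {i | a i ≠ w i}.ncard) (by
        intro a ha
        have h4 := hTgA a ha
        have h5 := hout2 a h4.1.1
        simp only [Finset.coe_range, Set.mem_Iio]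
        rw [h4.2.2]; omega)
    have hbd : ∀ ρ ∈ Finset.range (d + 1),
        ((Tg.filter (fun a => {i | a i ≠ w i}.ncard = ρ)).card : ℝ) ≤ J * Real.exp x ^ d * P g := by
      intro ρ _
      rcases (Tg.filter (fun a => {i | a i ≠ w i}.ncard = ρ)).eq_empty_or_nonempty with
        hemp | ⟨a0, ha0⟩
      · rw [hemp]; simp only [Finset.card_empty, Nat.cast_zero]
        have := hP g
        positivity
      rw [Finset.mem_filter] at ha0
      obtain ⟨ha0A, ha0D, ha0w⟩ := hTgA a0 ha0.1
      have h6 := hcore ρ x D w (Tg.filter (fun a => {i | a i ≠ w i}.ncard = ρ)) hx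
        (Finset.Subset.refl _) hwN (by
          intro a ha
          rw [Finset.mem_filter] at ha
          have h4 := hTgA a ha.1
          exact ⟨h4.1, h4.2.1, ha.2⟩)
      have h7 := (hout a0 ha0A.1).2
      rw [← ha0w, ha0.2, card_filter_sub D (fun i => a0 i = t0 i ∨ a0 i = t1 i)] at h7
      have h8 : P g = s ^ (Finset.univ.filter
          (fun i : D => a0 i = t0 i ∨ a0 i = t1 i)).card := by
        have : g = fun i : D => a0 i := by
          have := ha0.1
          rw [hTg, Finset.mem_filter] at this
          exact this.2.symm
        subst this
        simp only [P]
        rw [Finset.prod_ite]; simp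
      have h9 : (s ^ 2) ^ ρ ≤ P g := by
        rw [h8, ← pow_mul]
        exact pow_le_pow_right₀ hs1 h7
      refine h6.trans ?_
      rw [hs]
      have h10 : ((2 : ℝ) ^ ρ0) ^ (min ρ ρ0) ≤ J :=
        pow_le_pow_right₀ (one_le_pow₀ (by norm_num)) (min_le_right _ _)
      calc _ ≤ J * P g * Real.exp x ^ d := by
            have := hP g
            gcongr
        _ = _ := by ring
    rw [hcard]
    push_cast
    refine (Finset.sum_le_sum hbd).trans ?_
    rw [Finset.sum_const, Finset.card_range, nsmul_eq_mul]
    push_cast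
    apply le_of_eq; ring
end

section
/- Let n ≥ 2 and d ≥ 1 be integers. Every d-maximal set S ⊆ [n]^∞ has at least (1/2)·(d/log(2d))^{2/3} elements (in particular, if S is finite then |S| ≥ (1/2)·(d/log(2d))^{2/3}). -/
open Finset in
lemma aux_extreme {I J K : Type*} [Fintype I] [Fintype J] [Fintype K]
    (c : K → I → J → ℝ) (y : I → J → ℝ) (hy : ∀ i, y i ∈ stdSimplex ℝ J) :
    ∃ z : I → J → ℝ, (∀ i, z i ∈ stdSimplex ℝ J) ∧
      (∀ k, ∑ i, ∑ j, z i j * c k i j = ∑ i, ∑ j, y i j * c k i j) ∧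
      ∃ F : Finset I, F.card ≤ Fintype.card K ∧
        ∀ i ∉ F, ∀ j l, j ≠ l → z i j * z i l = 0 := by
  classical
  let A : Set (I → J → ℝ) := (Set.univ.pi fun _ => stdSimplex ℝ J) ∩
    {z | ∀ k, ∑ i, ∑ j, z i j * c k i j = ∑ i, ∑ j, y i j * c k i j}
  have hAc : IsCompact A := by
    apply IsCompact.inter_right
    · exact isCompact_univ_pi fun _ => isCompact_stdSimplex ℝ J
    · simp only [Set.ofPred_forall]
      refine isClosed_iInter fun k => isClosed_eq (by fun_prop) (by fun_prop)
  have hAn : A.Nonempty := ⟨y, by simpa [Set.mem_pi] using hy, fun k => rfl⟩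
  obtain ⟨z, hz⟩ := hAc.extremePoints_nonempty hAn
  have hzA : z ∈ A := hz.1
  have hzs : ∀ i, z i ∈ stdSimplex ℝ J := fun i => hzA.1 i (Set.mem_univ i)
  refine ⟨z, hzs, hzA.2, univ.filter (fun i => ∃ j l, j ≠ l ∧ z i j * z i l ≠ 0), ?_, ?_⟩
  swap
  · intro i hi j l hjl
    by_contra h
    exact hi (by simp only [mem_filter, mem_univ, true_and]; exact ⟨j, l, hjl, h⟩)
  set F := univ.filter (fun i => ∃ j l, j ≠ l ∧ z i j * z i l ≠ 0) with hF
  by_contra hcard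
  push Not at hcard
  have hex : ∀ i : F, ∃ j l, j ≠ l ∧ z i j * z i l ≠ 0 := fun i => by
    exact (mem_filter.1 i.2).2
  choose a b hab hnz using hex
  let v : F → (K → ℝ) := fun i k => c k i (a i) - c k i (b i)
  have hdep : ¬ LinearIndependent ℝ v := by
    intro h
    have := h.fintype_card_le_finrank
    simp at this
    omega
  rw [Fintype.not_linearIndependent_iff] at hdep
  obtain ⟨g, hg, i0, hi0⟩ := hdep
  let w : I → J → ℝ := fun i j => if h : i ∈ F then
    g ⟨i, h⟩ * ((if j = a ⟨i, h⟩ then 1 else 0) - (if j = b ⟨i, h⟩ then 1 else 0)) else 0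
  have hwsum : ∀ i, ∑ j, w i j = 0 := by
    intro i
    by_cases h : i ∈ F
    · simp [w, h, ← Finset.mul_sum]
    · simp [w, h]
  have hwc : ∀ k, ∑ i, ∑ j, w i j * c k i j = 0 := by
    intro k
    have h1 : ∀ i, ∑ j, w i j * c k i j = if h : i ∈ F then g ⟨i, h⟩ * v ⟨i, h⟩ k else 0 := by
      intro i
      by_cases h : i ∈ F
      · simp [w, h, v, mul_assoc, ← Finset.mul_sum, sub_mul]
      · simp [w, h]
    simp_rw [h1]
    have h2 := congrFun hg k
    simp only [Finset.sum_apply, Pi.smul_apply, smul_eq_mul, Pi.zero_apply] at h2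
    refine Eq.trans ?_ h2
    rw [Finset.sum_dite]
    rw [Finset.sum_const_zero, add_zero]
    refine Finset.sum_bij (fun i _ => ⟨i.1, by simpa using (mem_filter.1 i.2).2⟩) ?_ ?_ ?_ ?_
    · simp
    · intro x _ y _ h
      exact Subtype.ext (Subtype.mk.inj h)
    · intro x _
      refine ⟨⟨x.1, by simp⟩, by simp, rfl⟩
    · intro x _
      rfl
  have hw0 : w i0 (a i0) ≠ 0 := by
    simp [w, hab i0, hi0]
  have hpos : ∀ i j, w i j ≠ 0 → 0 < z i j := by
    intro i j hw
    have hnn := (hzs i).1 j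
    rcases hnn.lt_or_eq with h | h
    · exact h
    exfalso
    apply hw
    by_cases hi : i ∈ F
    · have hh := hnz ⟨i, hi⟩
      have h1 : j ≠ a ⟨i, hi⟩ := by
        rintro rfl
        exact hh (by simp [← h])
      have h2 : j ≠ b ⟨i, hi⟩ := by
        rintro rfl
        exact hh (by simp [← h])
      simp [w, hi, h1, h2]
    · simp [w, hi]
  have hev : ∀ᶠ t : ℝ in nhds 0, ∀ i j, 0 ≤ z i j + t * w i j ∧ 0 ≤ z i j - t * w i j := by
    simp only [Filter.eventually_all]
    intro i j
    by_cases hw : w i j = 0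
    · simp [hw, (hzs i).1 j]
    · have hp := hpos i j hw
      have e1 : ∀ᶠ t : ℝ in nhds 0, 0 < z i j + t * w i j := by
        apply ContinuousAt.eventually_lt (by fun_prop) (by fun_prop)
        simpa using hp
      have e2 : ∀ᶠ t : ℝ in nhds 0, 0 < z i j - t * w i j := by
        apply ContinuousAt.eventually_lt (by fun_prop) (by fun_prop)
        simpa using hp
      filter_upwards [e1, e2] with t h1 h2
      exact ⟨h1.le, h2.le⟩
  obtain ⟨t, ht, htpos⟩ := ((hev.filter_mono nhdsWithin_le_nhds).and
    (self_mem_nhdsWithin : Set.Ioi (0:ℝ) ∈ nhdsWithin 0 (Set.Ioi 0))).exists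
  have htpos : 0 < t := htpos
  have hmem : ∀ s : ℝ, (∀ i j, 0 ≤ z i j + s * w i j) → (fun i j => z i j + s * w i j) ∈ A := by
    intro s hs
    refine ⟨fun i _ => ⟨hs i, ?_⟩, fun k => ?_⟩
    · rw [sum_add_distrib, ← mul_sum, hwsum, (hzs i).2]; simp
    · simp only [add_mul, sum_add_distrib, mul_assoc, ← mul_sum, hwc]
      simpa using hzA.2 k
  have m1 := hmem t (fun i j => (ht i j).1)
  have m2 := hmem (-t) (fun i j => by have := (ht i j).2; linarith)
  have hzz : z ∈ openSegment ℝ (fun i j => z i j + t * w i j) (fun i j => z i j + (-t) * w i j) := by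
    refine ⟨1/2, 1/2, by norm_num, by norm_num, by norm_num, ?_⟩
    ext i j
    simp
    ring
  have := hz.2 m1 m2 hzz
  have h3 := congrFun (congrFun this i0) (a i0)
  simp [htpos.ne', hw0] at h3

open Finset in
lemma aux_mgf {J : Type*} [Fintype J] (y c : J → ℝ) (hy : y ∈ stdSimplex ℝ J) (r : ℝ)
    (B : ℝ) (hB : ∀ j l, y j * y l * Real.cosh (r * (c j - c l)) ≤ y j * y l * B) :
    ∑ j, y j * Real.exp (r * (c j - ∑ l, y l * c l)) ≤ B := by
  have hj : Real.exp (-(r * ∑ l, y l * c l)) ≤ ∑ l, y l * Real.exp (-(r * c l)) := by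
    have := convexOn_exp.map_sum_le (t := univ) (w := y) (p := fun l => -(r * c l))
      (fun i _ => hy.1 i) hy.2 (by simp)
    simp only [smul_eq_mul] at this
    have e : -(r * ∑ l, y l * c l) = ∑ x, y x * -(r * c x) := by
      rw [mul_sum, ← sum_neg_distrib]
      exact sum_congr rfl fun _ _ => by ring
    rw [e]
    exact this
  have e1 : ∑ j, y j * Real.exp (r * (c j - ∑ l, y l * c l)) =
      (∑ j, y j * Real.exp (r * c j)) * Real.exp (-(r * ∑ l, y l * c l)) := by
    rw [sum_mul]
    refine sum_congr rfl fun j _ => ?_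
    rw [mul_assoc, ← Real.exp_add]; congr 2; ring
  have hnn : 0 ≤ ∑ j, y j * Real.exp (r * c j) :=
    sum_nonneg fun j _ => mul_nonneg (hy.1 j) (Real.exp_pos _).le
  have e2 : (∑ j, y j * Real.exp (r * c j)) * (∑ l, y l * Real.exp (-(r * c l))) =
      ∑ j, ∑ l, y j * y l * Real.exp (r * (c j - c l)) := by
    rw [sum_mul_sum]
    refine sum_congr rfl fun j _ => sum_congr rfl fun l _ => ?_
    rw [mul_mul_mul_comm, ← Real.exp_add]; congr 2; ring
  have e3 : ∑ j, ∑ l, y j * y l * Real.exp (r * (c j - c l)) =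
      ∑ j, ∑ l, y j * y l * Real.cosh (r * (c j - c l)) := by
    have h : ∑ j, ∑ l, y j * y l * Real.exp (r * (c j - c l)) =
      ∑ j, ∑ l, y j * y l * Real.exp (-(r * (c j - c l))) := by
      rw [sum_comm]
      refine sum_congr rfl fun j _ => sum_congr rfl fun l _ => ?_
      rw [mul_comm (y l)]; congr 2; ring
    have h2 : ∑ j, ∑ l, y j * y l * Real.cosh (r * (c j - c l)) =
      (∑ j, ∑ l, y j * y l * Real.exp (r * (c j - c l)) +
        ∑ j, ∑ l, y j * y l * Real.exp (-(r * (c j - c l)))) / 2 := by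
      simp only [← sum_add_distrib, sum_div]
      refine sum_congr rfl fun j _ => sum_congr rfl fun l _ => ?_
      rw [Real.cosh_eq]; ring
    rw [h2, ← h]; ring
  rw [e1]
  refine (mul_le_mul_of_nonneg_left hj hnn).trans ?_
  rw [e2, e3]
  refine (sum_le_sum fun j _ => sum_le_sum fun l _ => hB j l).trans ?_
  simp only [mul_assoc, ← mul_sum, ← sum_mul]
  rw [hy.2]; simp

open Finset in
lemma aux_round {I J K : Type*} [Fintype I] [Fintype J] [Fintype K]
    (c : K → I → J → ℝ) (hc0 : ∀ k i j, 0 ≤ c k i j) (hc1 : ∀ k i j, c k i j ≤ 1)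
    (y : I → J → ℝ) (hy : ∀ i, y i ∈ stdSimplex ℝ J) (t : ℝ) (ht : 0 < t)
    (hK : 0 < Fintype.card K)
    (hlt : (Fintype.card K : ℝ) * Real.exp (-(t ^ 2 / (2 * Fintype.card K))) < 1) :
    ∃ f : I → J, ∀ k, ∑ i, c k i (f i) < ∑ i, ∑ j, y i j * c k i j + t := by
  classical
  obtain ⟨z, hz, hzc, F, hF, hFz⟩ := aux_extreme c y hy
  simp_rw [← hzc]
  set m : ℝ := (Fintype.card K : ℝ) with hm
  have hm0 : 0 < m := by rw [hm]; exact_mod_cast hK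
  by_contra hcon
  push Not at hcon
  set r : ℝ := t / m with hr
  have hr0 : 0 < r := by positivity
  let μ : K → I → ℝ := fun k i => ∑ j, z i j * c k i j
  have hwt : ∑ f : I → J, ∏ i, z i (f i) = 1 := by
    have := Finset.prod_univ_sum (fun _ : I => (univ : Finset J)) (fun i j => z i j)
    rw [Fintype.piFinset_univ] at this
    rw [← this]
    exact prod_eq_one fun i _ => (hz i).2
  have hmgf : ∀ k, ∑ f : I → J, (∏ i, z i (f i)) * Real.exp (r * (∑ i, c k i (f i) - ∑ i, μ k i))
      ≤ Real.exp (m * (r ^ 2 / 2)) := by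
    intro k
    have h1 : ∑ f : I → J, (∏ i, z i (f i)) * Real.exp (r * (∑ i, c k i (f i) - ∑ i, μ k i)) =
        ∏ i, ∑ j, z i j * Real.exp (r * (c k i j - μ k i)) := by
      have := Finset.prod_univ_sum (fun _ : I => (univ : Finset J))
        (fun i j => z i j * Real.exp (r * (c k i j - μ k i)))
      rw [Fintype.piFinset_univ] at this
      rw [this]
      refine sum_congr rfl fun f _ => ?_
      rw [prod_mul_distrib, ← Real.exp_sum, ← mul_sum, sum_sub_distrib]
    rw [h1]
    have h2 : ∀ i, ∑ j, z i j * Real.exp (r * (c k i j - μ k i)) ≤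
        if i ∈ F then Real.exp (r ^ 2 / 2) else 1 := by
      intro i
      apply aux_mgf (z i) (c k i) (hz i) r
      intro j l
      have hnn : 0 ≤ z i j * z i l := mul_nonneg ((hz i).1 j) ((hz i).1 l)
      by_cases hi : i ∈ F
      · rw [if_pos hi]
        refine mul_le_mul_of_nonneg_left ((Real.cosh_le_exp_half_sq _).trans ?_) hnn
        rw [Real.exp_le_exp]
        have a1 := hc0 k i j
        have a2 := hc0 k i l
        have a3 := hc1 k i j
        have a4 := hc1 k i l
        have : (c k i j - c k i l) ^ 2 ≤ 1 := by
          rw [sq_le_one_iff_abs_le_one, abs_le]; constructor <;> linarith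
        rw [mul_pow]
        have := mul_le_mul_of_nonneg_left this (sq_nonneg r)
        linarith
      · rw [if_neg hi]
        by_cases hjl : j = l
        · subst hjl; simp
        · rw [hFz i hi j l hjl]; simp
    refine (prod_le_prod (fun i _ => sum_nonneg fun j _ =>
      mul_nonneg ((hz i).1 j) (Real.exp_pos _).le) (fun i _ => h2 i)).trans ?_
    rw [prod_ite]
    simp only [prod_const, one_pow, mul_one, filter_mem_eq_inter, univ_inter]
    rw [← Real.exp_nat_mul, Real.exp_le_exp]
    refine mul_le_mul_of_nonneg_right ?_ (by positivity)
    rw [hm]; exact_mod_cast hF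
  have hsum : (1 : ℝ) ≤ ∑ k : K, Real.exp (-(r * t)) * Real.exp (m * (r ^ 2 / 2)) := by
    calc (1 : ℝ) = ∑ f : I → J, ∏ i, z i (f i) := hwt.symm
      _ ≤ ∑ f : I → J, ∑ k, (∏ i, z i (f i)) *
          (Real.exp (-(r * t)) * Real.exp (r * (∑ i, c k i (f i) - ∑ i, μ k i))) := by
        refine sum_le_sum fun f _ => ?_
        have hp : 0 ≤ ∏ i, z i (f i) := prod_nonneg fun i _ => (hz i).1 _
        obtain ⟨k, hk⟩ := hcon f
        rw [← mul_sum]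
        refine le_mul_of_one_le_right hp ?_
        refine le_trans ?_ (single_le_sum (f := fun k => Real.exp (-(r * t)) *
          Real.exp (r * (∑ i, c k i (f i) - ∑ i, μ k i))) (fun k _ => by positivity) (mem_univ k))
        rw [← Real.exp_add]
        apply Real.one_le_exp
        have : 0 ≤ r * (∑ i, c k i (f i) - ∑ i, μ k i - t) :=
          mul_nonneg hr0.le (by simp only [μ]; linarith)
        linarith
      _ ≤ _ := by
        rw [sum_comm]
        refine sum_le_sum fun k _ => ?_
        refine le_trans (le_of_eq ?_) (mul_le_mul_of_nonneg_left (hmgf k) (Real.exp_pos _).le)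
        rw [mul_sum]
        exact sum_congr rfl fun f _ => by ring
  rw [sum_const, card_univ, nsmul_eq_mul, ← hm, ← Real.exp_add] at hsum
  have : -(r * t) + m * (r ^ 2 / 2) = -(t ^ 2 / (2 * m)) := by
    rw [hr]; field_simp; ring
  rw [this] at hsum
  linarith

lemma aux_num (d m : ℕ) (hd : 1 ≤ d) (hm : 1 ≤ m)
    (h : (m : ℝ) < (1 / 2 : ℝ) * ((d : ℝ) / Real.log (2 * (d : ℝ))) ^ ((2 : ℝ) / 3)) :
    (m : ℝ) * Real.exp (-(((d : ℝ) / m) ^ 2 / (2 * m))) < 1 := by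
  have hd' : (1 : ℝ) ≤ d := by exact_mod_cast hd
  have hm' : (1 : ℝ) ≤ m := by exact_mod_cast hm
  set L := Real.log (2 * (d : ℝ)) with hL
  have hL2 : 0.69 < L := by
    have h1 : Real.log 2 ≤ L := Real.log_le_log (by norm_num) (by linarith)
    have := Real.log_two_gt_d9
    linarith
  have hLpos : 0 < L := by linarith
  set q : ℝ := d / L with hq
  have hq0 : 0 < q := by positivity
  have hm3 : (2 * (m : ℝ)) ^ 3 < q ^ 2 := by
    have h1 : 2 * (m : ℝ) < q ^ ((2 : ℝ) / 3) := by linarith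
    have h2 : (2 * (m : ℝ)) ^ 3 < (q ^ ((2 : ℝ) / 3)) ^ 3 :=
      pow_lt_pow_left₀ h1 (by positivity) (by norm_num)
    have h3 : (q ^ ((2 : ℝ) / 3)) ^ 3 = q ^ 2 := by
      rw [← Real.rpow_natCast, ← Real.rpow_mul hq0.le]
      norm_num
    rwa [h3] at h2
  have hqL : q * L = d := by rw [hq]; field_simp
  -- m ≤ 2 d
  have hmd : (m : ℝ) ≤ 2 * d := by
    by_contra hcon
    push Not at hcon
    have hq2 : q ≤ 2 * d := by nlinarith
    have : q ^ 2 < (m : ℝ) ^ 2 := pow_lt_pow_left₀ (by linarith) hq0.le (by norm_num)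
    nlinarith [pow_pos (lt_of_lt_of_le one_pos hm') 2]
  have hlog : Real.log m ≤ L := Real.log_le_log (by linarith) hmd
  have hm0 : (0 : ℝ) < m := by linarith
  have key : Real.log m < ((d : ℝ) / m) ^ 2 / (2 * m) := by
    refine lt_of_le_of_lt hlog ?_
    have : ((d : ℝ) / m) ^ 2 / (2 * m) = d ^ 2 / (2 * m ^ 3) := by field_simp
    rw [this, lt_div_iff₀ (by positivity), ← hqL, mul_pow]
    have h8 : 2 * (m : ℝ) ^ 3 < q ^ 2 / 4 := by nlinarith
    calc L * (2 * (m : ℝ) ^ 3) < L * (q ^ 2 / 4) := mul_lt_mul_of_pos_left h8 hLpos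
      _ ≤ q ^ 2 * L ^ 2 := by nlinarith [mul_pos (pow_pos hq0 2) hLpos]
  calc (m : ℝ) * Real.exp (-(((d : ℝ) / m) ^ 2 / (2 * m)))
      = Real.exp (Real.log m + -(((d : ℝ) / m) ^ 2 / (2 * m))) := by
        rw [Real.exp_add, Real.exp_log hm0]
    _ < 1 := by rw [Real.exp_lt_one_iff]; linarith

lemma aux_inf (n d : ℕ) (hn : 2 ≤ n) (S : Set (ℕ → Fin n))
    (hS : ∀ x : ℕ → Fin n, (∀ s ∈ S, hDist n x s ≤ (d : ℕ∞)) → x ∈ S)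
    (x : ℕ → Fin n) (hx : ∀ s ∈ S, hDist n x s < (d : ℕ∞)) : S.Infinite := by
  classical
  have hnt : Nontrivial (Fin n) := Fin.nontrivial_iff_two_le.2 hn
  choose g hg using fun p => exists_ne (x p)
  refine Set.infinite_of_injective_forall_mem (f := fun p : ℕ => Function.update x p (g p)) ?_ ?_
  · intro p q h
    by_contra hpq
    have := congrFun h p
    simp [Function.update_of_ne hpq, hg] at this
  · intro p
    apply hS
    intro s hs
    have h1 : {i | Function.update x p (g p) i ≠ s i} ⊆ insert p {i | x i ≠ s i} := by
      intro i hi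
      by_cases hip : i = p
      · exact Or.inl hip
      · right; simpa [Function.update_of_ne hip] using hi
    have h2 := (Set.encard_le_encard h1).trans (Set.encard_insert_le _ _)
    refine le_trans h2 ?_
    exact Order.add_one_le_of_lt (hx s hs)

open Finset in
theorem stmt5 (n d : ℕ) (hn : 2 ≤ n) (hd : 1 ≤ d) (S : Set (ℕ → Fin n))
    (hmax : IsDMaximal n d S) :
    S.Infinite ∨
      (1 / 2 : ℝ) * ((d : ℝ) / Real.log (2 * (d : ℝ))) ^ ((2 : ℝ) / 3) ≤ (S.ncard : ℝ) := by
  classical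
  obtain ⟨hdiam, ⟨s0, hs0, -⟩, hS⟩ := hmax
  by_contra hcon
  push Not at hcon
  obtain ⟨hfin, hlt⟩ := hcon
  have hfin : S.Finite := by simpa [Set.not_infinite] using hfin
  have : Fintype S := hfin.fintype
  have : Nonempty S := ⟨⟨s0, hs0⟩⟩
  have hmc : S.ncard = Fintype.card S := by
    rw [← Nat.card_coe_set_eq, Nat.card_eq_fintype_card]
  rw [hmc] at hlt
  have hm1 : 1 ≤ Fintype.card S := Fintype.card_pos
  have hnum := aux_num d (Fintype.card S) hd hm1 hlt
  have hDfin : ∀ a b : S, {i | a.1 i ≠ b.1 i}.Finite := by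
    intro a b
    have h := hdiam a a.2 b b.2
    exact Set.encard_lt_top_iff.1 (lt_of_le_of_lt h (ENat.coe_lt_top d))
  have hTfin : (⋃ a : S, ⋃ b : S, {i | a.1 i ≠ b.1 i}).Finite :=
    Set.finite_iUnion fun a => Set.finite_iUnion fun b => hDfin a b
  set T := hTfin.toFinset with hT
  have hTm : ∀ i ∉ T, ∀ a b : S, a.1 i = b.1 i := by
    intro i hi a b
    by_contra h
    apply hi
    rw [hT, Set.Finite.mem_toFinset]
    simp only [Set.mem_iUnion]
    exact ⟨a, b, h⟩
  -- distance from a word agreeing with S outside T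
  have hdist : ∀ (x : ℕ → Fin n) (k : S), (∀ i ∉ T, x i = k.1 i) →
      hDist n x k = ((∑ i : T, if x i ≠ k.1 i then 1 else 0 : ℕ) : ℕ∞) := by
    intro x k hx
    have h1 : {i | x i ≠ k.1 i} = ((T.filter fun i => x i ≠ k.1 i : Finset ℕ) : Set ℕ) := by
      ext i
      simp only [Set.mem_setOf_eq, coe_filter]
      exact ⟨fun h => ⟨by by_contra hi; exact h (hx i hi), h⟩, fun h => h.2⟩
    rw [hDist, h1, Set.encard_coe_eq_coe_finsetCard, card_filter]
    rw [← Finset.sum_coe_sort T]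
  set m : ℝ := (Fintype.card S : ℝ) with hm
  have hm0 : 0 < m := by rw [hm]; exact_mod_cast hm1
  let c : S → T → S → ℝ := fun k i j => if j.1 i ≠ k.1 i then 1 else 0
  have hd0 : (0 : ℝ) < d := by exact_mod_cast hd
  obtain ⟨f, hf⟩ := aux_round c (fun k i j => by simp only [c]; split_ifs <;> norm_num)
    (fun k i j => by simp only [c]; split_ifs <;> norm_num)
    (fun _ _ => 1 / m) (fun _ => ⟨fun _ => by positivity, by
      rw [sum_const, card_univ, nsmul_eq_mul, ← hm]; field_simp⟩)
    (d / m) (by positivity) hm1 hnum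
  refine absurd hfin (aux_inf n d hn S hS
    (fun i => if h : i ∈ T then (f ⟨i, h⟩).1 i else s0 i) ?_)
  intro s hs
  have hk := hf ⟨s, hs⟩
  have e1 := hdist (fun i => if h : i ∈ T then (f ⟨i, h⟩).1 i else s0 i) ⟨s, hs⟩ (by
    intro i hi
    simp only [hi, dite_false]
    exact hTm i hi ⟨s0, hs0⟩ ⟨s, hs⟩)
  simp only at e1
  rw [e1, Nat.cast_lt]
  have hle : ∑ i : T, ∑ j : S, 1 / m * c ⟨s, hs⟩ i j ≤ 1 / m * ((m - 1) * d) := by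
    rw [sum_comm]
    simp only [← mul_sum]
    refine mul_le_mul_of_nonneg_left ?_ (by positivity)
    have h1 : ∀ j : S, ∑ i : T, c ⟨s, hs⟩ i j ≤ if j = ⟨s, hs⟩ then 0 else (d : ℝ) := by
      intro j
      by_cases hj : j = ⟨s, hs⟩
      · simp [c, hj]
      · rw [if_neg hj]
        have h2 := hdist j.1 ⟨s, hs⟩ (fun i hi => hTm i hi _ _)
        have h3 := hdiam j.1 j.2 s hs
        simp only at h2
        rw [h2, Nat.cast_le] at h3
        have h4 : ((∑ i : T, if j.1 i ≠ s i then 1 else 0 : ℕ) : ℝ) ≤ d := by exact_mod_cast h3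
        push_cast at h4
        exact h4
    refine (sum_le_sum fun j _ => h1 j).trans (le_of_eq ?_)
    rw [sum_ite]
    simp only [sum_const, nsmul_eq_mul, smul_zero, zero_add, mul_zero]
    rw [filter_ne' univ (⟨s, hs⟩ : S), card_erase_of_mem (mem_univ _), card_univ, Nat.cast_sub hm1, ← hm]
    simp
  have hfinal : (∑ i : T, c ⟨s, hs⟩ i (f i)) < d := by
    refine hk.trans_le ?_
    have : 1 / m * ((m - 1) * d) + d / m = d := by field_simp; ring
    linarith
  have : ((∑ i : T, if (if h : (i : ℕ) ∈ T then (f ⟨i, h⟩).1 i else s0 i) ≠ s i then 1 else 0 : ℕ) : ℝ)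
      < d := by
    push_cast
    refine lt_of_le_of_lt (le_of_eq ?_) hfinal
    refine sum_congr rfl fun i _ => ?_
    simp [c]
  exact_mod_cast this
end

section
/- Let n ≥ 1, r ≥ 1, d ≥ 1 be integers and let S ⊆ [n]^r be a d-maximal subset of [n]^r such that for every a ∈ S and every coordinate i ∈ [r] there is b ∈ S with a_i = b_i and dist(a,b) = d. Then S, viewed as a subset of [n+1]^r via the inclusion of alphabets [n] ⊆ [n+1], is d-maximal as a subset of [n+1]^r. -/
/-- `S ⊆ [m]^r` is `d`-maximal: it has diameter `d` and any word within Hamming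
distance `d` of all of `S` already belongs to `S`. -/
def IsDMaximalFin (m r d : ℕ) (S : Set (Fin r → Fin m)) : Prop :=
  (∀ a ∈ S, ∀ b ∈ S, hammingDist a b ≤ d) ∧
  (∃ a ∈ S, ∃ b ∈ S, hammingDist a b = d) ∧
  (∀ x : Fin r → Fin m, (∀ s ∈ S, hammingDist x s ≤ d) → x ∈ S)

theorem stmt6 (n r d : ℕ) (hn : 1 ≤ n) (hr : 1 ≤ r) (hd : 1 ≤ d)
    (S : Set (Fin r → Fin n)) (hmax : IsDMaximalFin n r d S)
    (hcond : ∀ a ∈ S, ∀ i : Fin r, ∃ b ∈ S, a i = b i ∧ hammingDist a b = d) :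
    IsDMaximalFin (n + 1) r d ((fun (a : Fin r → Fin n) (i : Fin r) => Fin.castSucc (a i)) '' S) := by
  obtain ⟨h1, h2, h3⟩ := hmax
  have key : ∀ a b : Fin r → Fin n,
      hammingDist (fun i => Fin.castSucc (a i)) (fun i => Fin.castSucc (b i)) = hammingDist a b :=
    fun a b => hammingDist_comp (fun _ => Fin.castSucc) (fun _ => Fin.castSucc_injective n)
  refine ⟨?_, ?_, ?_⟩
  · rintro _ ⟨a, ha, rfl⟩ _ ⟨b, hb, rfl⟩
    exact (key a b).le.trans (h1 a ha b hb)
  · obtain ⟨a, ha, b, hb, hab⟩ := h2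
    exact ⟨_, ⟨a, ha, rfl⟩, _, ⟨b, hb, rfl⟩, (key a b).trans hab⟩
  · intro x hx
    have hy : ∃ y : Fin r → Fin n, ∀ i, x i ≠ Fin.last n → Fin.castSucc (y i) = x i := by
      refine ⟨fun i => if h : x i ≠ Fin.last n then (x i).castPred h else ⟨0, hn⟩, ?_⟩
      intro i h
      simp [h]
    obtain ⟨y, hy⟩ := hy
    have hsub : ∀ s : Fin r → Fin n, ∀ i, y i ≠ s i → x i ≠ Fin.castSucc (s i) := by
      intro s i hne he
      have hl : x i ≠ Fin.last n := he ▸ Fin.castSucc_ne_last (s i)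
      exact hne (Fin.castSucc_injective n ((hy i hl).trans he))
    have hyS : y ∈ S := by
      apply h3
      intro s hs
      refine le_trans ?_ (hx _ ⟨s, hs, rfl⟩)
      unfold hammingDist
      apply Finset.card_le_card
      intro i hi
      simp only [Finset.mem_filter, Finset.mem_univ, true_and] at hi ⊢
      exact hsub s i hi
    refine ⟨y, hyS, ?_⟩
    funext i
    apply hy
    intro hl
    obtain ⟨b, hb, hib, hd'⟩ := hcond y hyS i
    have hlt : hammingDist y b < hammingDist x (fun i => Fin.castSucc (b i)) := by
      unfold hammingDist
      apply Finset.card_lt_card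
      rw [Finset.ssubset_iff_of_subset]
      · refine ⟨i, ?_, ?_⟩
        · simp only [Finset.mem_filter, Finset.mem_univ, true_and]
          rw [hl]
          exact (Fin.castSucc_ne_last (b i)).symm
        · simp [hib]
      · intro j hj
        simp only [Finset.mem_filter, Finset.mem_univ, true_and] at hj ⊢
        exact hsub b j hj
    have := hx _ ⟨b, hb, rfl⟩
    dsimp only at this
    omega
end

section
/- Let n ≥ 2, d ≥ 1, L ≥ 0 be integers and let S ⊆ [n]^∞ be a d-maximal set that contains no (L+1)-ball. Then for every y ∈ [n]^∞ there exists r ∈ S such that dist(r,y) ≥ d − L. -/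
theorem hDist_tri_s7 (n : ℕ) (x y s : ℕ → Fin n) :
    hDist n x s ≤ hDist n x y + hDist n s y := by
  unfold hDist
  refine le_trans (Set.encard_le_encard ?_) (Set.encard_union_le _ _)
  intro i hi
  simp only [Set.mem_union, Set.mem_setOf_eq] at hi ⊢
  by_contra h
  push Not at h
  exact hi (h.1.trans h.2.symm)

theorem stmt7 (n d L : ℕ) (hn : 2 ≤ n) (hd : 1 ≤ d)
    (S : Set (ℕ → Fin n)) (hmax : IsDMaximal n d S)
    (hball : ¬ ContainsBall n S (L + 1)) :
    ∀ y : ℕ → Fin n, ∃ r ∈ S, ((d - L : ℕ) : ℕ∞) ≤ hDist n r y := by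
  intro y
  by_contra! h
  obtain ⟨-, ⟨a, ha, -⟩, h3⟩ := hmax
  refine hball ⟨y, fun x hx => h3 x fun s hs => (hDist_tri_s7 n x y s).trans ?_⟩
  have hx' : hDist n x y ≤ ((L + 1 : ℕ) : ℕ∞) := hx
  have h1 := h s hs
  generalize hDist n x y = u at *
  generalize hDist n s y = v at *
  lift v to ℕ using ne_top_of_lt h1
  lift u to ℕ using ne_top_of_le_ne_top (ENat.coe_ne_top _) hx'
  norm_cast at *
  omega
end

section
/- Let n ≥ 2, d ≥ 1, L ≥ 0 be integers with 2L ≤ d, let S ⊆ [n]^∞ be a d-maximal set containing no (L+1)-ball, let w ∈ S, and let t be a template of weight m ≤ d that is regular with respect to w. Let k ≥ 0, set S_k = {a ∈ S : dist(a,w) = k}, and let S′ ⊆ S_k[t] be a finite subset. Then there exists a template t′ of weight m+1, regular with respect to w, such that |S′[t′]| ≥ (1/n)·((k − m − L)/(d − m/2 − L/2))·|S′| (as real numbers). -/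
/-- A word `a` fits the template `t` (entries `none` are wildcards). -/
def Fits (n : ℕ) (a : ℕ → Fin n) (t : ℕ → Option (Fin n)) : Prop :=
  ∀ i x, t i = some x → a i = x

/-- A template is regular with respect to `w` if it never fixes the letter of `w`. -/
def RegularWrt (n : ℕ) (w : ℕ → Fin n) (t : ℕ → Option (Fin n)) : Prop :=
  ∀ i, t i ≠ some (w i)

open Classical in
theorem aux_s (n d L : ℕ) (S : Set (ℕ → Fin n)) (hmax : IsDMaximal n d S)
    (hball : ¬ ContainsBall n S (L + 1)) (w : ℕ → Fin n) (hw : w ∈ S)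
    (t : ℕ → Option (Fin n)) (T : Finset ℕ) (hT : ∀ i, i ∈ T ↔ t i ≠ none)
    (hreg : RegularWrt n w t) :
    ∃ s ∈ S, ∃ D : Finset ℕ, (∀ i, i ∈ D ↔ i ∉ T ∧ s i ≠ w i) ∧
      d ≤ L + D.card + (T.filter (fun i => t i ≠ some (s i))).card ∧
      D.card + T.card ≤ d + (T.filter (fun i => t i ≠ some (s i))).card := by
  set u : ℕ → Fin n := fun i => (t i).getD (w i) with hu
  have h1 : ∃ x, hDist n x u ≤ ((L+1 : ℕ) : ℕ∞) ∧ x ∉ S := by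
    by_contra hc
    push Not at hc
    exact hball ⟨u, fun x hx => hc x hx⟩
  obtain ⟨x, hxu, hxS⟩ := h1
  have h2 : ∃ s ∈ S, (d : ℕ∞) < hDist n x s := by
    by_contra hc
    push Not at hc
    exact hxS (hmax.2.2 x hc)
  obtain ⟨s, hs, hxs⟩ := h2
  have hsw := hmax.1 s hs w hw
  have hfin : {i | s i ≠ w i}.Finite :=
    Set.finite_of_encard_le_coe hsw
  set W := hfin.toFinset with hW
  have hWm : ∀ i, i ∈ W ↔ s i ≠ w i := by intro i; simp [hW]
  have hWc : W.card ≤ d := by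
    unfold hDist at hsw
    rw [hfin.encard_eq_coe_toFinset_card] at hsw
    exact_mod_cast hsw
  refine ⟨s, hs, W.filter (fun i => i ∉ T), ?_, ?_, ?_⟩
  · intro i; simp [hWm, and_comm]
  · have hsub : {i | x i ≠ s i} ⊆ {i | x i ≠ u i} ∪ ((W.filter (fun i => i ∉ T) ∪ T.filter (fun i => t i ≠ some (s i)) : Finset ℕ) : Set ℕ) := by
      intro i hi
      by_cases hxi : x i = u i
      · right
        simp only [Set.mem_ofPred_eq, hxi] at hi
        simp only [Finset.coe_union, Finset.coe_filter, Set.mem_union, Set.mem_ofPred_eq, hWm, hT]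
        cases hti : t i with
        | none => simp [hu, hti] at hi ⊢; exact fun h => hi h.symm
        | some y => simp [hu, hti] at hi ⊢; exact hi
      · left; exact hxi
    have h3 := (Set.encard_le_encard hsub).trans (Set.encard_union_le _ _)
    rw [Set.encard_coe_eq_coe_finsetCard] at h3
    have h4 : (d : ℕ∞) < ((L+1 : ℕ) : ℕ∞) + _ := (hxs.trans_le h3).trans_le (add_le_add_left hxu _)
    have h5 := Finset.card_union_le (W.filter (fun i => i ∉ T)) (T.filter (fun i => t i ≠ some (s i)))
    have h6 : d < L + 1 + (W.filter (fun i => i ∉ T) ∪ T.filter (fun i => t i ≠ some (s i))).card := by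
      exact_mod_cast h4
    omega
  · have h7 := Finset.card_filter_add_card_filter_not (s := T) (fun i => t i ≠ some (s i))
    have h8 := Finset.card_filter_add_card_filter_not (s := W) (fun i => i ∉ T)
    have h9 : (T.filter (fun i => ¬ (t i ≠ some (s i)))).card ≤ (W.filter (fun i => ¬ (i ∉ T))).card := by
      apply Finset.card_le_card
      intro i hi
      simp only [Finset.mem_filter, not_not] at hi ⊢
      refine ⟨(hWm i).2 ?_, hi.1⟩
      intro h
      exact hreg i (by rw [hi.2, h])
    omega

open Classical in
theorem aux_a (n d k : ℕ) (w s a : ℕ → Fin n) (t : ℕ → Option (Fin n)) (T D : Finset ℕ)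
    (hT : ∀ i, i ∈ T ↔ t i ≠ none)
    (hD : ∀ i, i ∈ D ↔ i ∉ T ∧ s i ≠ w i) (hk : hDist n a w = k) (has : hDist n a s ≤ d)
    (hf : Fits n a t) :
    k + D.card + (T.filter (fun i => t i ≠ some (s i))).card ≤
      T.card + d + ((D.filter (fun i => a i ≠ w i)).card + (D.filter (fun i => a i = s i)).card) := by
  have hfA : {i | a i ≠ w i}.Finite := Set.finite_of_encard_eq_coe hk
  have hfB : {i | a i ≠ s i}.Finite := Set.finite_of_encard_le_coe has
  unfold hDist at hk has
  rw [hfA.encard_eq_coe_toFinset_card] at hk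
  rw [hfB.encard_eq_coe_toFinset_card] at has
  set A := hfA.toFinset with hA
  set B := hfB.toFinset with hB
  have hAm : ∀ i, i ∈ A ↔ a i ≠ w i := by intro i; simp [hA]
  have hBm : ∀ i, i ∈ B ↔ a i ≠ s i := by intro i; simp [hB]
  have hk' : A.card = k := by exact_mod_cast hk
  have hd' : B.card ≤ d := by exact_mod_cast has
  set P := T.filter (fun i => t i ≠ some (s i)) with hP
  set X := D.filter (fun i => a i ≠ w i) with hX
  set Y := D.filter (fun i => a i = s i) with hY
  set U := A ∪ B ∪ T ∪ D with hU
  have key : ∀ Z : Finset ℕ, Z ⊆ U → Z.card = ∑ i ∈ U, if i ∈ Z then 1 else 0 := by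
    intro Z hZ
    rw [Finset.sum_boole, Finset.filter_mem_eq_inter, Finset.inter_eq_right.2 hZ]; rfl
  have e : A.card + D.card + P.card ≤ T.card + B.card + (X.card + Y.card) := by
    rw [key A, key D, key P, key T, key B, key X, key Y]
    · simp only [← Finset.sum_add_distrib]
      apply Finset.sum_le_sum
      intro i _
      have hfi := hf i
      simp only [hP, hX, hY, Finset.mem_filter, hD, hAm, hBm]
      by_cases hiT : i ∈ T
      · obtain ⟨y, hy⟩ := Option.ne_none_iff_exists'.1 ((hT i).1 hiT)
        have := hfi y hy
        simp only [hiT, hy, this]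
        simp
        split_ifs <;> omega
      · simp only [hiT]
        by_cases h1 : s i = w i <;> by_cases h2 : a i = w i <;> by_cases h3 : a i = s i <;> simp_all
    all_goals intro i; simp only [hU, hP, hX, hY, Finset.mem_union, Finset.mem_filter]; tauto
  omega

theorem aux_upd (n m : ℕ) (w : ℕ → Fin n) (t : ℕ → Option (Fin n)) (T : Finset ℕ)
    (hT : ∀ i, i ∈ T ↔ t i ≠ none) (hm : T.card = m) (hreg : RegularWrt n w t)
    (i : ℕ) (hi : i ∉ T) (x : Fin n) (hx : x ≠ w i) :
    {j | Function.update t i (some x) j ≠ none}.Finite ∧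
    {j | Function.update t i (some x) j ≠ none}.ncard = m + 1 ∧
    RegularWrt n w (Function.update t i (some x)) := by
  have h : {j | Function.update t i (some x) j ≠ none} = ((insert i T : Finset ℕ) : Set ℕ) := by
    ext j
    by_cases hj : j = i
    · subst hj; simp
    · simp [hj, hT]
  rw [h]
  refine ⟨Finset.finite_toSet _, ?_, ?_⟩
  · rw [Set.ncard_coe_finset, Finset.card_insert_of_notMem hi, hm]
  · intro j
    by_cases hj : j = i
    · subst hj; simpa using hx
    · simpa [hj] using hreg j

theorem stmt8 (n d L : ℕ) (hn : 2 ≤ n) (hd : 1 ≤ d) (hL : 2 * L ≤ d)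
    (S : Set (ℕ → Fin n)) (hmax : IsDMaximal n d S) (hball : ¬ ContainsBall n S (L + 1))
    (w : ℕ → Fin n) (hw : w ∈ S)
    (t : ℕ → Option (Fin n)) (htfin : {i | t i ≠ none}.Finite)
    (m : ℕ) (hwt : {i | t i ≠ none}.ncard = m) (hmd : m ≤ d)
    (hreg : RegularWrt n w t)
    (k : ℕ) (S' : Set (ℕ → Fin n)) (hS'fin : S'.Finite)
    (hS'sub : S' ⊆ {a ∈ S | hDist n a w = (k : ℕ∞) ∧ Fits n a t}) :
    ∃ t' : ℕ → Option (Fin n),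
      {i | t' i ≠ none}.Finite ∧ {i | t' i ≠ none}.ncard = m + 1 ∧ RegularWrt n w t' ∧
      (1 / (n : ℝ)) * (((k : ℝ) - (m : ℝ) - (L : ℝ)) / ((d : ℝ) - (m : ℝ) / 2 - (L : ℝ) / 2)) *
          (S'.ncard : ℝ) ≤ ({a ∈ S' | Fits n a t'}.ncard : ℝ) := by
  classical
  set T := htfin.toFinset with hTdef
  have hT : ∀ i, i ∈ T ↔ t i ≠ none := by intro i; simp [hTdef]
  have hTm : T.card = m := by rw [← hwt, Set.ncard_eq_toFinset_card _ htfin]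
  obtain ⟨s, hs, D, hD, h1, h2⟩ := aux_s n d L S hmax hball w hw t T hT hreg
  set p := (T.filter (fun i => t i ≠ some (s i))).card with hp
  lift S' to Finset (ℕ → Fin n) using hS'fin
  have hn0 : (0:ℝ) < n := by positivity
  have hL' : 2 * (L:ℝ) ≤ d := by exact_mod_cast hL
  have hmd' : (m:ℝ) ≤ d := by exact_mod_cast hmd
  have hd' : (1:ℝ) ≤ d := by exact_mod_cast hd
  have hM : (0:ℝ) < (d : ℝ) - (m : ℝ) / 2 - (L : ℝ) / 2 := by linarith
  set M := (d : ℝ) - (m : ℝ) / 2 - (L : ℝ) / 2 with hMdef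
  set K := (k : ℝ) - (m : ℝ) - (L : ℝ) with hKdef
  rw [Set.ncard_coe_finset]
  set R := (1 / (n : ℝ)) * (K / M) * (S'.card : ℝ) with hR
  by_cases hRpos : R ≤ 0
  · obtain ⟨i, hi⟩ := Infinite.exists_notMem_finset T
    have : Nontrivial (Fin n) := Fin.nontrivial_iff_two_le.2 hn
    obtain ⟨x, hx⟩ := exists_ne (w i)
    obtain ⟨g1, g2, g3⟩ := aux_upd n m w t T hT hTm hreg i hi x hx
    exact ⟨_, g1, g2, g3, hRpos.trans (Nat.cast_nonneg _)⟩
  push Not at hRpos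
  have hS0 : (0:ℝ) < S'.card := by
    rcases Nat.eq_zero_or_pos S'.card with h | h
    · rw [hR, h] at hRpos; simp at hRpos
    · exact_mod_cast h
  have hRe : n * M * R = K * S'.card := by rw [hR]; field_simp
  have hK : 0 < K := by
    have : 0 < K * S'.card := by rw [← hRe]; positivity
    exact pos_of_mul_pos_left this hS0.le
  have hkd : (k:ℝ) ≤ d := by
    have : 0 < S'.card := by exact_mod_cast hS0
    obtain ⟨a, ha⟩ := Finset.card_pos.1 this
    have h := hS'sub (Finset.mem_coe.2 ha)
    have h' := hmax.1 a h.1 w hw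
    rw [h.2.1] at h'
    exact_mod_cast h'
  by_contra hno
  have hc : ∀ i ∈ D, ∀ x, x ≠ w i → ((S'.filter (fun a => a i = x)).card : ℝ) < R := by
    intro i hi x hx
    by_contra hcon
    push Not at hcon
    have hiT := ((hD i).1 hi).1
    obtain ⟨g1, g2, g3⟩ := aux_upd n m w t T hT hTm hreg i hiT x hx
    refine hno ⟨_, g1, g2, g3, hcon.trans (le_of_eq ?_)⟩
    rw [← Set.ncard_coe_finset]
    congr 2
    ext a
    simp only [Finset.coe_filter, Set.mem_ofPred_eq, Finset.mem_coe]
    refine and_congr_right fun ha => ?_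
    have hfit := (hS'sub (Finset.mem_coe.2 ha)).2.2
    constructor
    · intro hax j y hj
      by_cases hji : j = i
      · subst hji; simp at hj; rw [hax, hj]
      · simp [hji] at hj; exact hfit j y hj
    · intro h
      exact h i x (by simp)
  have hcol : ∀ i ∈ D, ((S'.filter (fun a => a i ≠ w i)).card : ℝ) + ((S'.filter (fun a => a i = s i)).card : ℝ) < n * R := by
    intro i hi
    have hsi := hc i hi (s i) ((hD i).1 hi).2
    have e1 : (S'.filter (fun a => a i ≠ w i)).card =
        ∑ x ∈ Finset.univ.erase (w i), (S'.filter (fun a => a i = x)).card := by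
      rw [Finset.card_eq_sum_card_fiberwise (f := fun a => a i) (t := Finset.univ.erase (w i))]
      · refine Finset.sum_congr rfl fun x hx => ?_
        congr 1
        ext a
        simp only [Finset.mem_filter]
        have := Finset.ne_of_mem_erase hx
        constructor
        · rintro ⟨⟨h1, h2⟩, h3⟩; exact ⟨h1, h3⟩
        · rintro ⟨h1, h3⟩; exact ⟨⟨h1, h3 ▸ this⟩, h3⟩
      · intro a ha
        simp at ha ⊢; exact ha.2
    have e2 : ((S'.filter (fun a => a i ≠ w i)).card : ℝ) ≤ ((n:ℝ) - 1) * R := by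
      rw [e1]; push_cast
      refine (Finset.sum_le_card_nsmul _ _ R fun x hx => (hc i hi x (Finset.ne_of_mem_erase hx)).le).trans ?_
      rw [Finset.card_erase_of_mem (Finset.mem_univ _), Finset.card_univ, Fintype.card_fin, nsmul_eq_mul,
        Nat.cast_sub (by omega)]
      simp
    linarith
  have hrow : ∀ a ∈ S', (k:ℝ) + D.card + p - m - d ≤ (D.filter (fun i => a i ≠ w i)).card + ((D.filter (fun i => a i = s i)).card : ℝ) := by
    intro a ha
    have h := hS'sub (Finset.mem_coe.2 ha)
    have := aux_a n d k w s a t T D hT hD h.2.1 (hmax.1 a h.1 s hs) h.2.2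
    rw [hTm] at this
    have : (k:ℝ) + D.card + p ≤ m + d + ((D.filter (fun i => a i ≠ w i)).card + ((D.filter (fun i => a i = s i)).card : ℝ)) := by exact_mod_cast this
    linarith
  have hsum := Finset.card_nsmul_le_sum S' _ _ hrow
  have hswap : ∀ (q : (ℕ → Fin n) → ℕ → Prop) [∀ a i, Decidable (q a i)], ∑ a ∈ S', ((D.filter (fun i => q a i)).card : ℝ) = ∑ i ∈ D, ((S'.filter (fun a => q a i)).card : ℝ) := by
    intro q _
    simp only [Finset.card_filter]
    push_cast
    exact Finset.sum_comm
  rw [Finset.sum_add_distrib, hswap (fun a i => a i ≠ w i), hswap (fun a i => a i = s i), ← Finset.sum_add_distrib] at hsum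
  have h1' : (d:ℝ) ≤ L + D.card + p := by exact_mod_cast h1
  have h2' : (D.card:ℝ) + m ≤ d + p := by rw [hTm] at h2; exact_mod_cast h2
  set N := (k:ℝ) + D.card + p - m - d with hN
  have hNK : K ≤ N := by linarith
  have hNpos : 0 < S'.card * N := mul_pos hS0 (by linarith)
  rw [nsmul_eq_mul] at hsum
  rcases D.eq_empty_or_nonempty with hDe | hDe
  · rw [hDe, Finset.sum_empty] at hsum
    linarith
  have hsum2 := hsum.trans_lt (Finset.sum_lt_sum_of_nonempty hDe hcol)
  rw [Finset.sum_const, nsmul_eq_mul] at hsum2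
  have h3 : (S'.card * N) * M < (D.card * (n * R)) * M := mul_lt_mul_of_pos_right hsum2 hM
  have h4 : (D.card * (n * R)) * M = S'.card * (D.card * K) := by
    linear_combination (D.card : ℝ) * hRe
  have h5 : (S'.card : ℝ) * (N * M) < S'.card * (D.card * K) := by
    rw [← h4]; linarith
  have h6 : N * M < D.card * K := lt_of_mul_lt_mul_left h5 hS0.le
  have hm0 : (0:ℝ) ≤ m := Nat.cast_nonneg _
  have hL0 : (0:ℝ) ≤ L := Nat.cast_nonneg _
  have h7 : 0 ≤ (N - K) * (M - K / 2) := mul_nonneg (by linarith) (by linarith)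
  have h8 : 0 ≤ K * (M + (N - K) / 2 - D.card) := mul_nonneg hK.le (by linarith)
  linarith
end

section
/- Let n ≥ 2, p ≥ n, k ≥ 1 be integers, let w ∈ [n]^∞, and let X ⊆ [n]^∞ be a set of words each at Hamming distance exactly k from w. If |X| > Sun(p, 2k) (in particular, if X is infinite), then X contains p distinct words that form a p-sunflower with respect to w. -/
/-- A family of `p` sets forming a sunflower: `p` distinct sets whose pairwise
intersections are all equal. -/
def IsSunflowerFam (p : ℕ) (F : Finset (Finset ℕ)) : Prop :=
  F.card = p ∧ ∃ C : Finset ℕ, ∀ A ∈ F, ∀ B ∈ F, A ≠ B → A ∩ B = C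

/-- `Sun p k`: the least `N` such that every family of more than `N` distinct
`k`-element sets contains a `p`-sunflower. -/
noncomputable def Sun (p k : ℕ) : ℕ :=
  sInf {N : ℕ | ∀ F : Finset (Finset ℕ), (∀ A ∈ F, A.card = k) → N < F.card →
    ∃ G ⊆ F, IsSunflowerFam p G}

/-- The words `f 0, …, f (p-1)` form a `p`-sunflower with respect to `w`: they are
distinct, and in each coordinate either all agree, or exactly one differs from `w`. -/
def SunflowerWrt (n p : ℕ) (w : ℕ → Fin n) (f : Fin p → (ℕ → Fin n)) : Prop :=
  Function.Injective f ∧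
  ∀ i : ℕ, (∀ j j' : Fin p, f j i = f j' i) ∨ (∃! j : Fin p, f j i ≠ w i)

theorem sunflower_exists (p : ℕ) (k : ℕ) : ∃ N : ℕ, ∀ F : Finset (Finset ℕ),
    (∀ A ∈ F, A.card = k) → N < F.card → ∃ G ⊆ F, IsSunflowerFam p G := by
  classical
  induction k with
  | zero =>
    refine ⟨1, fun F hF hc => ?_⟩
    exfalso
    have : F ⊆ {∅} := by
      intro A hA
      simpa using hF A hA
    have := Finset.card_le_card this
    simp at this
    omega
  | succ k ih =>
    obtain ⟨N, hN⟩ := ih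
    refine ⟨p * (k + 1) * N, fun F hF hc => ?_⟩
    have hne : (F.powerset.filter (fun G => ∀ A ∈ G, ∀ B ∈ G, A ≠ B → A ∩ B = ∅)).Nonempty :=
      ⟨∅, by simp⟩
    obtain ⟨G, hG, hmax⟩ := Finset.exists_max_image _ Finset.card hne
    simp only [Finset.mem_filter, Finset.mem_powerset] at hG hmax
    obtain ⟨hGF, hGd⟩ := hG
    by_cases hp : p ≤ G.card
    · obtain ⟨H, hHG, hH⟩ := Finset.exists_subset_card_eq hp
      exact ⟨H, hHG.trans hGF, hH, ∅, fun A hA B hB => hGd A (hHG hA) B (hHG hB)⟩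
    · have hU : (G.biUnion id).card ≤ p * (k + 1) := by
        refine (Finset.card_biUnion_le_card_mul G id (k + 1) fun A hA => (hF A (hGF hA)).le).trans ?_
        exact Nat.mul_le_mul_right _ (by omega)
      have hmeet : ∀ A ∈ F, ∃ x ∈ G.biUnion id, x ∈ A := by
        intro A hA
        by_contra hcon
        push Not at hcon
        have hdis : ∀ B ∈ G, A ∩ B = ∅ := by
          intro B hB
          ext x
          simp only [Finset.mem_inter, Finset.notMem_empty, iff_false, not_and]
          intro hxA hxB
          exact hcon x (Finset.mem_biUnion.2 ⟨B, hB, hxB⟩) hxA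
        have hAG : A ∉ G := by
          intro h
          have h1 := hdis A h
          have h2 := hF A hA
          simp at h1
          simp [h1] at h2
        have := hmax (insert A G) ⟨Finset.insert_subset hA hGF, by
          intro B hB C hC hBC
          rw [Finset.mem_insert] at hB hC
          rcases hB with rfl | hB <;> rcases hC with rfl | hC
          · exact absurd rfl hBC
          · exact hdis C hC
          · rw [Finset.inter_comm]; exact hdis B hB
          · exact hGd B hB C hC hBC⟩
        rw [Finset.card_insert_of_notMem hAG] at this
        omega
      have hx : ∃ x, N < (F.filter (fun A => x ∈ A)).card := by
        by_contra hcon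
        push Not at hcon
        have hsub : F ⊆ (G.biUnion id).biUnion (fun x => F.filter (fun A => x ∈ A)) := by
          intro A hA
          obtain ⟨x, hx, hxA⟩ := hmeet A hA
          exact Finset.mem_biUnion.2 ⟨x, hx, Finset.mem_filter.2 ⟨hA, hxA⟩⟩
        have h1 := (Finset.card_le_card hsub).trans
          (Finset.card_biUnion_le_card_mul _ _ N fun x _ => hcon x)
        have h2 := Nat.mul_le_mul_right N hU
        omega
      obtain ⟨x, hx⟩ := hx
      have hinj : Set.InjOn (fun A : Finset ℕ => A.erase x) (F.filter (fun A => x ∈ A)) := by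
        intro A hA B hB hAB
        simp only [Finset.coe_filter, Set.mem_ofPred_eq] at hA hB
        have := congrArg (insert x) hAB
        simpa [Finset.insert_erase hA.2, Finset.insert_erase hB.2] using this
      obtain ⟨H, hHs, hHc, C, hC⟩ := hN ((F.filter (fun A => x ∈ A)).image (fun A => A.erase x)) (by
        intro A hA
        obtain ⟨B, hB, rfl⟩ := Finset.mem_image.1 hA
        rw [Finset.mem_filter] at hB
        rw [Finset.card_erase_of_mem hB.2, hF B hB.1]
        rfl) (by rwa [Finset.card_image_of_injOn hinj])
      have hH : ∀ A ∈ H, x ∉ A ∧ insert x A ∈ F := by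
        intro A hA
        obtain ⟨B, hB, rfl⟩ := Finset.mem_image.1 (hHs hA)
        rw [Finset.mem_filter] at hB
        refine ⟨Finset.notMem_erase _ _, ?_⟩
        rw [Finset.insert_erase hB.2]
        exact hB.1
      refine ⟨H.image (insert x), ?_, ?_, insert x C, ?_⟩
      · intro A hA
        obtain ⟨B, hB, rfl⟩ := Finset.mem_image.1 hA
        exact (hH B hB).2
      · rw [Finset.card_image_of_injOn, hHc]
        intro A hA B hB hAB
        have := congrArg (fun S => Finset.erase S x) hAB
        simpa [Finset.erase_insert (hH A hA).1, Finset.erase_insert (hH B hB).1] using this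
      · intro A hA B hB hAB
        obtain ⟨A, hA', rfl⟩ := Finset.mem_image.1 hA
        obtain ⟨B, hB', rfl⟩ := Finset.mem_image.1 hB
        rw [← Finset.insert_inter_distrib, hC A hA' B hB']
        rintro rfl
        exact hAB rfl

theorem sun_spec (p k : ℕ) (F : Finset (Finset ℕ)) (hF : ∀ A ∈ F, A.card = k)
    (h : Sun p k < F.card) : ∃ G ⊆ F, IsSunflowerFam p G :=
  Nat.sInf_mem (s := {N : ℕ | ∀ F : Finset (Finset ℕ), (∀ A ∈ F, A.card = k) → N < F.card →
    ∃ G ⊆ F, IsSunflowerFam p G}) (sunflower_exists p k) F hF h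

/-- encoding of words at finite distance from `w` -/
theorem enc_exists (n k : ℕ) (w a : ℕ → Fin n) (h : hDist n a w = (k : ℕ∞)) :
    ∃ E : Finset ℕ, E.card = 2 * k ∧ (∀ i, Nat.pair i n ∈ E ↔ a i ≠ w i) ∧
      (∀ i (v : Fin n), Nat.pair i v ∈ E ↔ a i ≠ w i ∧ a i = v) := by
  classical
  have hfin : {i | a i ≠ w i}.Finite := Set.finite_of_encard_eq_coe h
  obtain ⟨D, hD⟩ := hfin.exists_finset
  have hDc : D.card = k := by
    have h2 : {i | a i ≠ w i} = (D : Set ℕ) := by ext i; simp [hD]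
    rw [hDist, h2, Set.encard_coe_eq_coe_finsetCard] at h
    exact_mod_cast h
  refine ⟨D.image (fun i => Nat.pair i n) ∪ D.image (fun i => Nat.pair i (a i)), ?_, ?_, ?_⟩
  · rw [Finset.card_union_of_disjoint, Finset.card_image_of_injective,
      Finset.card_image_of_injective, hDc, two_mul]
    · intro i j hij
      exact (Nat.pair_eq_pair.1 hij).1
    · intro i j hij
      exact (Nat.pair_eq_pair.1 hij).1
    · rw [Finset.disjoint_left]
      intro x hx hy
      obtain ⟨i, -, rfl⟩ := Finset.mem_image.1 hx
      obtain ⟨j, -, hj⟩ := Finset.mem_image.1 hy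
      have := (Nat.pair_eq_pair.1 hj).2
      have := (a j).2
      omega
  · intro i
    simp only [Finset.mem_union, Finset.mem_image, Nat.pair_eq_pair, hD, Set.mem_ofPred_eq]
    constructor
    · rintro (⟨j, hj, rfl, -⟩ | ⟨j, hj, rfl, -⟩) <;> exact hj
    · intro hi
      exact Or.inl ⟨i, hi, by simp⟩
  · intro i v
    simp only [Finset.mem_union, Finset.mem_image, Nat.pair_eq_pair, hD, Set.mem_ofPred_eq]
    constructor
    · rintro (⟨j, hj, rfl, h⟩ | ⟨j, hj, rfl, h⟩)
      · have := v.2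
        omega
      · exact ⟨hj, Fin.ext h⟩
    · rintro ⟨hi, rfl⟩
      exact Or.inr ⟨i, hi, rfl, rfl⟩

theorem stmt9 (n p k : ℕ) (hn : 2 ≤ n) (hp : n ≤ p) (hk : 1 ≤ k)
    (w : ℕ → Fin n) (X : Set (ℕ → Fin n)) (hX : ∀ a ∈ X, hDist n a w = (k : ℕ∞))
    (hcard : (Sun p (2 * k) : ℕ∞) < X.encard) :
    ∃ f : Fin p → (ℕ → Fin n), (∀ j, f j ∈ X) ∧ SunflowerWrt n p w f := by
  classical
  obtain ⟨T, hTX, hTc⟩ := Set.exists_subset_encard_eq (Order.add_one_le_of_lt hcard)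
  have hTfin : T.Finite := Set.finite_of_encard_eq_coe (k := Sun p (2 * k) + 1) (by
    rw [hTc]; push_cast; rfl)
  lift T to Finset (ℕ → Fin n) using hTfin
  rw [Set.encard_coe_eq_coe_finsetCard] at hTc
  have hTc' : T.card = Sun p (2 * k) + 1 := by exact_mod_cast hTc
  have hE : ∀ a : ℕ → Fin n, ∃ E : Finset ℕ, a ∈ X → E.card = 2 * k ∧
      (∀ i, Nat.pair i n ∈ E ↔ a i ≠ w i) ∧
      (∀ i (v : Fin n), Nat.pair i v ∈ E ↔ a i ≠ w i ∧ a i = v) := by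
    intro a
    by_cases ha : a ∈ X
    · obtain ⟨E, h⟩ := enc_exists n k w a (hX a ha)
      exact ⟨E, fun _ => h⟩
    · exact ⟨∅, fun h => absurd h ha⟩
  choose E hE using hE
  have hinj : Set.InjOn E X := by
    intro a ha b hb hab
    funext i
    obtain ⟨-, ha1, ha2⟩ := hE a ha
    obtain ⟨-, hb1, hb2⟩ := hE b hb
    by_cases h : a i = w i
    · by_contra hne
      have : b i ≠ w i := fun h' => hne (h.trans h'.symm)
      rw [← hb1, ← hab, ha1] at this
      exact this h
    · have h3 := (ha2 i (a i)).2 ⟨h, rfl⟩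
      rw [hab, hb2] at h3
      exact h3.2.symm
  obtain ⟨G, hG, hGc, C, hC⟩ := sun_spec p (2 * k) (T.image E) (by
    intro A hA
    obtain ⟨a, ha, rfl⟩ := Finset.mem_image.1 hA
    exact (hE a (hTX ha)).1) (by
    rw [Finset.card_image_of_injOn (hinj.mono hTX)]
    omega)
  have e : Fin p ≃ G := (Fintype.equivFinOfCardEq (by simpa using hGc)).symm
  have hf : ∀ j : Fin p, ∃ a ∈ X, E a = (e j : Finset ℕ) := by
    intro j
    obtain ⟨a, ha, h⟩ := Finset.mem_image.1 (hG (e j).2)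
    exact ⟨a, hTX ha, h⟩
  choose f hfX hfE using hf
  have hEinj : ∀ j j', j ≠ j' → E (f j) ≠ E (f j') := by
    intro j j' hj h
    rw [hfE, hfE] at h
    exact hj (e.injective (Subtype.ext h))
  have hcore : ∀ j j', j ≠ j' → E (f j) ∩ E (f j') = C := by
    intro j j' hj
    refine hC _ ?_ _ ?_ (hEinj j j' hj)
    · rw [hfE]; exact (e j).2
    · rw [hfE]; exact (e j').2
  have hp2 : ∀ j : Fin p, ∃ j', j ≠ j' := by
    intro j
    have : Nontrivial (Fin p) := Fin.nontrivial_iff_two_le.2 (by omega)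
    obtain ⟨j', h⟩ := exists_ne j
    exact ⟨j', h.symm⟩
  have hall : ∀ x ∈ C, ∀ j, x ∈ E (f j) := by
    intro x hx j
    obtain ⟨j', h⟩ := hp2 j
    rw [← hcore j j' h] at hx
    exact (Finset.mem_inter.1 hx).1
  refine ⟨f, hfX, ?_, ?_⟩
  · intro j j' h
    by_contra hne
    exact hEinj j j' hne (by rw [h])
  · intro i
    by_cases h0 : ∀ j, f j i = w i
    · left
      intro j j'
      rw [h0, h0]
    push Not at h0
    obtain ⟨j, hj⟩ := h0
    by_cases h1 : ∀ j', f j' i ≠ w i → j' = j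
    · right
      exact ⟨j, hj, h1⟩
    left
    push Not at h1
    obtain ⟨j', hj', hne⟩ := h1
    have hmem : Nat.pair i n ∈ C := by
      rw [← hcore j' j hne, Finset.mem_inter]
      exact ⟨((hE _ (hfX j')).2.1 i).2 hj', ((hE _ (hfX j)).2.1 i).2 hj⟩
    have hdiff : ∀ l, f l i ≠ w i := fun l => ((hE _ (hfX l)).2.1 i).1 (hall _ hmem l)
    obtain ⟨l, l', hll, hl⟩ : ∃ l l', l ≠ l' ∧ f l i = f l' i := by
      by_contra hcon
      push Not at hcon
      have hi : Function.Injective (fun l => f l i) := by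
        intro l l' h
        by_contra hne
        exact hcon l l' hne h
      have hs : (Finset.univ.image (fun l => f l i)) ⊆ Finset.univ.erase (w i) := by
        intro v hv
        obtain ⟨l, -, rfl⟩ := Finset.mem_image.1 hv
        simpa using hdiff l
      have := Finset.card_le_card hs
      rw [Finset.card_image_of_injective _ hi, Finset.card_erase_of_mem (Finset.mem_univ _)] at this
      simp at this
      omega
    have hmem2 : Nat.pair i (f l i) ∈ C := by
      rw [← hcore l l' hll, Finset.mem_inter]
      exact ⟨((hE _ (hfX l)).2.2 i _).2 ⟨hdiff l, rfl⟩,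
        ((hE _ (hfX l')).2.2 i _).2 ⟨hdiff l', hl.symm⟩⟩
    have hval : ∀ m, f m i = f l i := fun m => (((hE _ (hfX m)).2.2 i _).1 (hall _ hmem2 m)).2
    intro a b
    rw [hval a, hval b]
end
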